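/- arXiv:2511.02974 — 3 statements merged into one kernel-verified Lean document; each statement's English description precedes it below -/
import Mathlib

section
/- There is an absolute constant c > 0 with the following property. Let f : ℝ^n → [0,∞) be a geometric log-concave integrable function (n ≥ 2). Then for every 1 ≤ k ≤ n−1 and every k-dimensional linear subspace H of ℝ^n, c·(∫_H f(x) dx)^{1/k} ≤ (∫_H Δ_out f(x) dx)^{1/k}, where the integrals are with respect to k-dimensional Lebesgue measure on H. -/
open MeasureTheory Metric Set
open scoped ENNReal RealInnerProductSpace Pointwise

noncomputable section

/-- `f` is a geometric log-concave integrable function: nonnegative, log-concave, centered,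
attaining its maximum at the origin, with positive finite integral. -/
structure IsGeomLogConcave {n : ℕ} (f : EuclideanSpace ℝ (Fin n) → ℝ) : Prop where
  nonneg : ∀ x, 0 ≤ f x
  logConcave : ∀ x y : EuclideanSpace ℝ (Fin n), ∀ a b : ℝ, 0 ≤ a → 0 ≤ b → a + b = 1 →
    f x ^ a * f y ^ b ≤ f (a • x + b • y)
  centered : (∫ x, f x • x) = (0 : EuclideanSpace ℝ (Fin n))
  maxAtZero : ∀ x, f x ≤ f 0
  integrable : Integrable f
  integral_pos : 0 < ∫ x, f x

/-- `Δ_out f (x) = sup { √(f x₁ · f (−x₂)) : x = (x₁ + x₂)/2 }`. -/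
def deltaOut {n : ℕ} (f : EuclideanSpace ℝ (Fin n) → ℝ) (x : EuclideanSpace ℝ (Fin n)) : ℝ :=
  sSup {t : ℝ | ∃ x₁ x₂, x = (2⁻¹ : ℝ) • (x₁ + x₂) ∧ t = Real.sqrt (f x₁ * f (-x₂))}

/-- `Δ_in f (x) = min (f x) (f (−x))`. -/
def deltaIn {n : ℕ} (f : EuclideanSpace ℝ (Fin n) → ℝ) (x : EuclideanSpace ℝ (Fin n)) : ℝ :=
  min (f x) (f (-x))

theorem le_deltaOut_aux {n : ℕ} {f : EuclideanSpace ℝ (Fin n) → ℝ} (hf : IsGeomLogConcave f)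
    (x : EuclideanSpace ℝ (Fin n)) : f ((2 : ℝ) • x) ≤ deltaOut f x := by
  have hb : BddAbove {t : ℝ | ∃ x₁ x₂, x = (2⁻¹ : ℝ) • (x₁ + x₂) ∧
      t = Real.sqrt (f x₁ * f (-x₂))} := by
    refine ⟨f 0, ?_⟩
    rintro t ⟨x₁, x₂, -, rfl⟩
    refine Real.sqrt_le_iff.2 ⟨hf.nonneg 0, ?_⟩
    rw [sq]
    exact mul_le_mul (hf.maxAtZero _) (hf.maxAtZero _) (hf.nonneg _) (hf.nonneg _)
  refine le_trans ?_ (le_csSup hb ⟨(2 : ℝ) • x, 0, ?_, rfl⟩)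
  · refine Real.le_sqrt_of_sq_le ?_
    rw [sq, neg_zero]
    exact mul_le_mul_of_nonneg_left (hf.maxAtZero _) (hf.nonneg _)
  · rw [add_zero, smul_smul]; norm_num

theorem lintegral_scale_aux {n : ℕ} (g : EuclideanSpace ℝ (Fin n) → ℝ≥0∞) (k : ℕ)
    (H : Submodule ℝ (EuclideanSpace ℝ (Fin n))) :
    ∫⁻ x in (H : Set (EuclideanSpace ℝ (Fin n))), g ((2 : ℝ) • x) ∂μH[(k : ℝ)] =
      ENNReal.ofReal (1 / 2) ^ k *
        ∫⁻ x in (H : Set (EuclideanSpace ℝ (Fin n))), g x ∂μH[(k : ℝ)] := by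
  have h2 : (2 : ℝ) ≠ 0 := by norm_num
  let e : EuclideanSpace ℝ (Fin n) ≃ᵐ EuclideanSpace ℝ (Fin n) :=
    (Homeomorph.smulOfNeZero (2 : ℝ) h2).toMeasurableEquiv
  have he : ∀ x, e x = (2 : ℝ) • x := fun x => rfl
  have hH : e ⁻¹' (H : Set (EuclideanSpace ℝ (Fin n))) = H := by
    ext x
    simp only [mem_preimage, he, SetLike.mem_coe]
    exact H.smul_mem_iff h2
  have hm : Measure.map e (μH[(k : ℝ)] : Measure (EuclideanSpace ℝ (Fin n))) =
      ENNReal.ofReal (1 / 2) ^ k • μH[(k : ℝ)] := by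
    ext s hs
    rw [e.map_apply]
    have : e ⁻¹' s = (2⁻¹ : ℝ) • s := by
      rw [← preimage_smul_inv₀ (inv_ne_zero h2), inv_inv]; rfl
    rw [this, Measure.hausdorffMeasure_smul₀ (by positivity) (by positivity)]
    have h3 : ENNReal.ofReal (1 / 2) = ((‖(2⁻¹ : ℝ)‖₊ : NNReal) : ℝ≥0∞) := by
      rw [← enorm_eq_nnnorm, Real.enorm_eq_ofReal (by norm_num)]; norm_num
    rw [h3, NNReal.rpow_natCast]
    simp [ENNReal.smul_def, ENNReal.inv_pow]
  have h4 := lintegral_map_equiv (μ := (μH[(k : ℝ)]).restrict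
    (H : Set (EuclideanSpace ℝ (Fin n)))) g e
  rw [← hH] at h4
  rw [← e.restrict_map, hm, hH, Measure.restrict_smul, lintegral_smul_measure] at h4
  exact h4.symm

/-- Theorem (functional lower bound):
`c·(∫_H f)^{1/k} ≤ (∫_H Δ_out f)^{1/k}` for geometric log-concave `f`. -/
theorem stmt6 :
    ∃ c : ℝ, 0 < c ∧ ∀ (n : ℕ), 2 ≤ n →
      ∀ f : EuclideanSpace ℝ (Fin n) → ℝ, IsGeomLogConcave f →
        ∀ k : ℕ, 1 ≤ k → k ≤ n - 1 →
          ∀ H : Submodule ℝ (EuclideanSpace ℝ (Fin n)), Module.finrank ℝ H = k →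
            ENNReal.ofReal c *
                (∫⁻ x in (H : Set (EuclideanSpace ℝ (Fin n))),
                  ENNReal.ofReal (f x) ∂μH[(k : ℝ)]) ^ ((k : ℝ)⁻¹) ≤
              (∫⁻ x in (H : Set (EuclideanSpace ℝ (Fin n))),
                ENNReal.ofReal (deltaOut f x) ∂μH[(k : ℝ)]) ^ ((k : ℝ)⁻¹) := by
  refine ⟨1 / 2, by norm_num, ?_⟩
  intro n _ f hf k hk _ H _
  have hk0 : (k : ℝ) ≠ 0 := by positivity
  have h1 := lintegral_scale_aux (fun x => ENNReal.ofReal (f x)) k H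
  have h2 : ENNReal.ofReal (1 / 2) = (ENNReal.ofReal (1 / 2) ^ k) ^ ((k : ℝ)⁻¹) := by
    rw [← ENNReal.rpow_natCast, ← ENNReal.rpow_mul, mul_inv_cancel₀ hk0, ENNReal.rpow_one]
  rw [h2, ← ENNReal.mul_rpow_of_nonneg _ _ (by positivity), ← h1]
  refine ENNReal.rpow_le_rpow ?_ (by positivity)
  exact lintegral_mono fun x => ENNReal.ofReal_le_ofReal (le_deltaOut_aux hf x)
end
end

section
/- There is an absolute constant C > 0 with the following property. Let f : ℝ^n → [0,∞) be a geometric log-concave integrable function (n ≥ 2). Then for every 1 ≤ k ≤ n−1 and every k-dimensional linear subspace H of ℝ^n, (∫_H P_H(Δ_out f)(x) dx)^{1/k} ≤ C·(n/k)²·(log n)^3 · (∫_H P_H(Δ_in f)(x) dx)^{1/k}, where the integrals are with respect to k-dimensional Lebesgue measure on H. -/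
open MeasureTheory Metric Set
open scoped ENNReal RealInnerProductSpace Pointwise

noncomputable section

/-- The projection of a function `g` onto a subspace `H`:
`(P_H g)(z) = sup { g (y + z) : y ∈ H^⊥ }`. -/
def funProj {n : ℕ} (H : Submodule ℝ (EuclideanSpace ℝ (Fin n)))
    (g : EuclideanSpace ℝ (Fin n) → ℝ) (z : EuclideanSpace ℝ (Fin n)) : ℝ :=
  sSup ((fun y => g (y + z)) '' (Hᗮ : Set (EuclideanSpace ℝ (Fin n))))


lemma enn_iSup_rpow {ι : Sort*} (x : ι → ℝ≥0∞) {a : ℝ} (ha : 0 < a) :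
    (⨆ i, x i) ^ a = ⨆ i, x i ^ a := (ENNReal.orderIsoRpow a ha).map_iSup x

lemma iSup_rpow_mul_le {ι κ : Sort*} (x : ι → ℝ≥0∞) (y : κ → ℝ≥0∞) {a b : ℝ}
    (ha : 0 < a) (hb : 0 < b) (z : ℝ≥0∞) (h : ∀ i j, x i ^ a * y j ^ b ≤ z) :
    (⨆ i, x i) ^ a * (⨆ j, y j) ^ b ≤ z := by
  rw [enn_iSup_rpow x ha, enn_iSup_rpow y hb, ENNReal.iSup_mul]
  refine iSup_le fun i => ?_
  rw [ENNReal.mul_iSup]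
  exact iSup_le fun j => h i j

lemma enn_amgm (x y : ℝ≥0∞) {a b : ℝ} (ha : 0 < a) (hb : 0 < b) (hab : a + b = 1) :
    x ^ a * y ^ b ≤ ENNReal.ofReal a * x + ENNReal.ofReal b * y := by
  have hpq : (a⁻¹).HolderConjugate b⁻¹ := by
    refine Real.holderConjugate_iff.2 ⟨?_, ?_⟩
    · apply (one_lt_inv₀ ha).2; linarith
    · simpa using hab
  have := ENNReal.young_inequality (x ^ a) (y ^ b) hpq
  rw [← ENNReal.rpow_mul, ← ENNReal.rpow_mul, mul_inv_cancel₀ ha.ne', mul_inv_cancel₀ hb.ne',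
    ENNReal.rpow_one, ENNReal.rpow_one, ENNReal.ofReal_inv_of_pos ha, ENNReal.ofReal_inv_of_pos hb,
    div_eq_mul_inv, div_eq_mul_inv, inv_inv, inv_inv, mul_comm x, mul_comm y] at this
  exact this

lemma vol_affine (A : Set ℝ) {a : ℝ} (ha : 0 < a) (c : ℝ) :
    volume ((fun x => a * x + c) '' A) = ENNReal.ofReal a * volume A := by
  have : (fun x => a * x + c) '' A = (fun x => x + c) '' (a • A) := by
    rw [← image_smul, image_image]; rfl
  rw [this, image_add_right, measure_preimage_add_right, Measure.addHaar_smul]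
  simp [abs_of_pos ha]

lemma bm1_compact {a b : ℝ} (ha : 0 < a) (hb : 0 < b) {A B C : Set ℝ} (hA : IsCompact A)
    (hB : IsCompact B) (hA0 : A.Nonempty) (hB0 : B.Nonempty)
    (h : ∀ x ∈ A, ∀ y ∈ B, a * x + b * y ∈ C) :
    ENNReal.ofReal a * volume A + ENNReal.ofReal b * volume B ≤ volume C := by
  have hα := hA.sSup_mem hA0
  have hβ := hB.sInf_mem hB0
  set α := sSup A
  set β := sInf B
  rw [← vol_affine A ha (b * β), ← vol_affine B hb (a * α)]
  have hm : MeasurableSet ((fun x => b * x + a * α) '' B) :=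
    (hB.image (by fun_prop)).measurableSet
  rw [← measure_union₀ hm.nullMeasurableSet]
  · apply measure_mono
    rintro z (⟨x, hx, rfl⟩ | ⟨y, hy, rfl⟩)
    · exact h x hx β hβ
    · have := h α hα y hy
      simpa [add_comm] using this
  · refine measure_mono_null (t := {a * α + b * β}) ?_ (by simp)
    rintro z ⟨⟨x, hx, rfl⟩, ⟨y, hy, hxy⟩⟩
    have h1 : x ≤ α := le_csSup hA.bddAbove hx
    have h2 : β ≤ y := csInf_le hB.bddBelow hy
    simp only at hxy ⊢
    rw [mem_singleton_iff]
    nlinarith [mul_le_mul_of_nonneg_left h1 ha.le, mul_le_mul_of_nonneg_left h2 hb.le]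

lemma vol_eq_iSup_compact {A : Set ℝ} (hA : MeasurableSet A) (hA0 : A.Nonempty) :
    volume A = ⨆ K : {K : Set ℝ // K ⊆ A ∧ IsCompact K ∧ K.Nonempty}, volume K.1 := by
  apply le_antisymm
  · rw [hA.measure_eq_iSup_isCompact]
    obtain ⟨x0, hx0⟩ := hA0
    refine iSup₂_le fun K hK => iSup_le fun hKc => ?_
    exact le_iSup_of_le ⟨insert x0 K, insert_subset hx0 hK, hKc.insert x0, ⟨x0, by simp⟩⟩
      (measure_mono (subset_insert _ _))
  · exact iSup_le fun K => measure_mono K.2.1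

lemma bm1 {a b : ℝ} (ha : 0 < a) (hb : 0 < b) {A B C : Set ℝ} (hA : MeasurableSet A)
    (hB : MeasurableSet B) (hA0 : A.Nonempty) (hB0 : B.Nonempty)
    (h : ∀ x ∈ A, ∀ y ∈ B, a * x + b * y ∈ C) :
    ENNReal.ofReal a * volume A + ENNReal.ofReal b * volume B ≤ volume C := by
  rw [vol_eq_iSup_compact hA hA0, vol_eq_iSup_compact hB hB0, ENNReal.mul_iSup, ENNReal.mul_iSup]
  have : Nonempty {K : Set ℝ // K ⊆ A ∧ IsCompact K ∧ K.Nonempty} := by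
    obtain ⟨x0, hx0⟩ := hA0; exact ⟨{x0}, by simpa using hx0, isCompact_singleton, by simp⟩
  have : Nonempty {K : Set ℝ // K ⊆ B ∧ IsCompact K ∧ K.Nonempty} := by
    obtain ⟨x0, hx0⟩ := hB0; exact ⟨{x0}, by simpa using hx0, isCompact_singleton, by simp⟩
  rw [ENNReal.iSup_add]
  refine iSup_le fun K => ?_
  rw [ENNReal.add_iSup]
  refine iSup_le fun L => ?_
  exact bm1_compact ha hb K.2.2.1 L.2.2.1 K.2.2.2 L.2.2.2
    (fun x hx y hy => h x (K.2.1 hx) y (L.2.1 hy))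

lemma pl1_real {a b : ℝ} (ha : 0 < a) (hb : 0 < b) {F G H : ℝ → ℝ}
    (hF : Measurable F) (hG : Measurable G) (hH : Measurable H)
    (hF0 : ∀ x, 0 ≤ F x) (hG0 : ∀ x, 0 ≤ G x) (hH0 : ∀ x, 0 ≤ H x)
    (hF1 : ∀ x, F x ≤ 1) (hG1 : ∀ x, G x ≤ 1)
    (hFs : ∀ t < 1, ∃ x, t < F x) (hGs : ∀ t < 1, ∃ x, t < G x)
    (h : ∀ t, 0 < t → ∀ x y, t < F x → t < G y → t < H (a * x + b * y)) :
    ENNReal.ofReal a * (∫⁻ x, ENNReal.ofReal (F x)) + ENNReal.ofReal b * (∫⁻ x, ENNReal.ofReal (G x))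
      ≤ ∫⁻ x, ENNReal.ofReal (H x) := by
  rw [lintegral_eq_lintegral_meas_lt volume (Filter.Eventually.of_forall hF0) hF.aemeasurable,
    lintegral_eq_lintegral_meas_lt volume (Filter.Eventually.of_forall hG0) hG.aemeasurable,
    lintegral_eq_lintegral_meas_lt volume (Filter.Eventually.of_forall hH0) hH.aemeasurable]
  have hmeas : ∀ F : ℝ → ℝ, Measurable fun t => volume {x | t < F x} := fun F =>
    Antitone.measurable (fun s t hst => measure_mono fun x (hx : t < F x) => lt_of_le_of_lt hst hx)
  rw [← lintegral_const_mul _ (hmeas F), ← lintegral_const_mul _ (hmeas G),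
    ← lintegral_add_left ((hmeas F).const_mul _)]
  refine setLIntegral_mono' measurableSet_Ioi fun t (ht : 0 < t) => ?_
  by_cases ht1 : t < 1
  · exact bm1 ha hb (measurableSet_lt measurable_const hF) (measurableSet_lt measurable_const hG)
      (hFs t ht1) (hGs t ht1) (fun x hx y hy => h t ht x y hx hy)
  · have e1 : {x | t < F x} = ∅ := by
      ext x; simp only [mem_ofPred_eq, mem_empty_iff_false, iff_false, not_lt]
      exact (hF1 x).trans (not_lt.1 ht1)
    have e2 : {x | t < G x} = ∅ := by
      ext x; simp only [mem_ofPred_eq, mem_empty_iff_false, iff_false, not_lt]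
      exact (hG1 x).trans (not_lt.1 ht1)
    simp [e1, e2]

def PL {V : Type*} [AddCommGroup V] [Module ℝ V] [MeasurableSpace V] (μ : Measure V) : Prop :=
  ∀ a b : ℝ, 0 < a → 0 < b → a + b = 1 → ∀ f g h : V → ℝ≥0∞, Measurable f → Measurable g →
    Measurable h → (∀ x y, f x ^ a * g y ^ b ≤ h (a • x + b • y)) →
    (∫⁻ x, f x ∂μ) ^ a * (∫⁻ x, g x ∂μ) ^ b ≤ ∫⁻ x, h x ∂μ

lemma lt_toReal_of_ofReal_lt {t : ℝ} {y : ℝ≥0∞} (hy : y ≠ ∞) (h : ENNReal.ofReal t < y) :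
    t < y.toReal := by
  by_contra hc
  have := ENNReal.ofReal_le_ofReal (not_lt.1 hc)
  rw [ENNReal.ofReal_toReal hy] at this
  exact absurd h (not_lt.2 this)

lemma pl1_bdd {a b : ℝ} (ha : 0 < a) (hb : 0 < b) (hab : a + b = 1) {f g h : ℝ → ℝ≥0∞}
    (hf : Measurable f) (hg : Measurable g) (hh : Measurable h)
    (hfb : (⨆ x, f x) ≠ ∞) (hgb : (⨆ x, g x) ≠ ∞)
    (H : ∀ x y, f x ^ a * g y ^ b ≤ h (a • x + b • y)) :
    (∫⁻ x, f x) ^ a * (∫⁻ x, g x) ^ b ≤ ∫⁻ x, h x := by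
  have le_f : ∀ x, f x ≤ ⨆ x, f x := le_iSup f
  have le_g : ∀ x, g x ≤ ⨆ x, g x := le_iSup g
  have lt_f : ∀ c, c < ⨆ x, f x → ∃ x, c < f x := fun c hc => lt_iSup_iff.1 hc
  have lt_g : ∀ c, c < ⨆ x, g x → ∃ x, c < g x := fun c hc => lt_iSup_iff.1 hc
  generalize (⨆ x, f x) = A at *
  generalize (⨆ x, g x) = B at *
  rcases eq_or_ne A 0 with hA | hA
  · have : ∀ x, f x = 0 := fun x => by simpa [hA] using le_f x
    simp [this, ha]
  rcases eq_or_ne B 0 with hB | hB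
  · have : ∀ x, g x = 0 := fun x => by simpa [hB] using le_g x
    simp [this, hb]
  set S := A ^ a * B ^ b with hS
  have hAa : A ^ a ≠ 0 := by simp [ENNReal.rpow_eq_zero_iff, hA, hfb]
  have hBb : B ^ b ≠ 0 := by simp [ENNReal.rpow_eq_zero_iff, hB, hgb]
  have hAa' : A ^ a ≠ ∞ := ENNReal.rpow_ne_top_of_nonneg ha.le hfb
  have hBb' : B ^ b ≠ ∞ := ENNReal.rpow_ne_top_of_nonneg hb.le hgb
  have hS0 : S ≠ 0 := mul_ne_zero hAa hBb
  have hS1 : S ≠ ∞ := ENNReal.mul_ne_top hAa' hBb'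
  have fdl : ∀ x, f x / A ≤ 1 := fun x => ENNReal.div_le_of_le_mul (by simpa using le_f x)
  have gdl : ∀ x, g x / B ≤ 1 := fun x => ENNReal.div_le_of_le_mul (by simpa using le_g x)
  have fdt : ∀ x, f x / A ≠ ∞ := fun x => ne_top_of_le_ne_top ENNReal.one_ne_top (fdl x)
  have gdt : ∀ x, g x / B ≠ ∞ := fun x => ne_top_of_le_ne_top ENNReal.one_ne_top (gdl x)
  have hdt : ∀ x, min (h x / S) 1 ≠ ∞ :=
    fun x => ne_top_of_le_ne_top ENNReal.one_ne_top (min_le_right _ _)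
  have key := pl1_real ha hb (F := fun x => (f x / A).toReal) (G := fun x => (g x / B).toReal)
    (H := fun x => (min (h x / S) 1).toReal) (hf.div_const A).ennreal_toReal
    (hg.div_const B).ennreal_toReal
    (((hh.div_const S).min measurable_const).ennreal_toReal) (fun x => ENNReal.toReal_nonneg)
    (fun x => ENNReal.toReal_nonneg) (fun x => ENNReal.toReal_nonneg)
    (fun x => ENNReal.toReal_mono ENNReal.one_ne_top (fdl x))
    (fun x => ENNReal.toReal_mono ENNReal.one_ne_top (gdl x)) ?_ ?_ ?_
  · simp only [ENNReal.ofReal_toReal (fdt _), ENNReal.ofReal_toReal (gdt _),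
      ENNReal.ofReal_toReal (hdt _)] at key
    have e1 : ∫⁻ x, f x = A * ∫⁻ x, f x / A := by
      rw [← lintegral_const_mul _ (hf.div_const A)]
      simp only [ENNReal.mul_div_cancel hA hfb]
    have e2 : ∫⁻ x, g x = B * ∫⁻ x, g x / B := by
      rw [← lintegral_const_mul _ (hg.div_const B)]
      simp only [ENNReal.mul_div_cancel hB hgb]
    have e3 : ∫⁻ x, h x = S * ∫⁻ x, h x / S := by
      rw [← lintegral_const_mul _ (hh.div_const S)]
      simp only [ENNReal.mul_div_cancel hS0 hS1]
    rw [e1, e2, e3, ENNReal.mul_rpow_of_nonneg _ _ ha.le, ENNReal.mul_rpow_of_nonneg _ _ hb.le,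
      mul_mul_mul_comm]
    gcongr
    calc _ ≤ _ := enn_amgm _ _ ha hb hab
      _ ≤ _ := key
      _ ≤ _ := lintegral_mono fun x => min_le_left _ _
  · intro t ht
    obtain ⟨x, hx⟩ := lt_f (ENNReal.ofReal t * A) (by
      have : ENNReal.ofReal t < 1 := by simpa using ht
      calc _ < 1 * A := ENNReal.mul_lt_mul_left hA hfb this
        _ = A := one_mul _)
    refine ⟨x, ?_⟩
    have h2 : ENNReal.ofReal t < f x / A := by
      rwa [ENNReal.lt_div_iff_mul_lt (Or.inl hA) (Or.inl hfb)]
    exact lt_toReal_of_ofReal_lt (fdt x) h2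
  · intro t ht
    obtain ⟨x, hx⟩ := lt_g (ENNReal.ofReal t * B) (by
      have : ENNReal.ofReal t < 1 := by simpa using ht
      calc _ < 1 * B := ENNReal.mul_lt_mul_left hB hgb this
        _ = B := one_mul _)
    refine ⟨x, ?_⟩
    have h2 : ENNReal.ofReal t < g x / B := by
      rwa [ENNReal.lt_div_iff_mul_lt (Or.inl hB) (Or.inl hgb)]
    exact lt_toReal_of_ofReal_lt (gdt x) h2
  · intro t ht x y hx hy
    apply lt_toReal_of_ofReal_lt (hdt _)
    rw [← ENNReal.ofReal_lt_iff_lt_toReal ht.le (fdt x)] at hx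
    rw [← ENNReal.ofReal_lt_iff_lt_toReal ht.le (gdt y)] at hy
    refine lt_min ?_ (hx.trans_le (fdl x))
    have e : ENNReal.ofReal t = ENNReal.ofReal t ^ a * ENNReal.ofReal t ^ b := by
      rw [← ENNReal.rpow_add _ _ (by simpa using ht) ENNReal.ofReal_ne_top, hab, ENNReal.rpow_one]
    calc ENNReal.ofReal t = ENNReal.ofReal t ^ a * ENNReal.ofReal t ^ b := e
      _ < (f x / A) ^ a * (g y / B) ^ b := ENNReal.mul_lt_mul (ENNReal.rpow_lt_rpow hx ha)
          (ENNReal.rpow_lt_rpow hy hb)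
      _ = (f x ^ a * g y ^ b) / S := by
        rw [ENNReal.div_rpow_of_nonneg _ _ ha.le, ENNReal.div_rpow_of_nonneg _ _ hb.le, hS]
        rw [div_eq_mul_inv, div_eq_mul_inv, div_eq_mul_inv, ENNReal.mul_inv (Or.inl hAa) (Or.inl hAa')]
        ring
      _ ≤ h (a * x + b * y) / S := by gcongr; exact H x y

lemma pl_real : PL (volume : Measure ℝ) := by
  intro a b ha hb hab f g h hf hg hh H
  have key : ∀ f : ℝ → ℝ≥0∞, Measurable f → ∫⁻ x, f x = ⨆ n : ℕ, ∫⁻ x, min (f x) n := by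
    intro f hf
    rw [← lintegral_iSup (fun n => hf.min measurable_const)]
    · congr 1; ext x
      rw [← inf_iSup_eq]
      simp [ENNReal.iSup_natCast]
    · intro m n hmn x
      simp only
      gcongr
  rw [key f hf, key g hg]
  refine iSup_rpow_mul_le _ _ ha hb _ fun i j => ?_
  refine pl1_bdd ha hb hab (hf.min measurable_const) (hg.min measurable_const) hh ?_ ?_ ?_
  · exact ne_top_of_le_ne_top (ENNReal.natCast_ne_top i) (iSup_le fun x => min_le_right _ _)
  · exact ne_top_of_le_ne_top (ENNReal.natCast_ne_top j) (iSup_le fun x => min_le_right _ _)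
  · intro x y
    refine le_trans ?_ (H x y)
    gcongr <;> exact min_le_left _ _


lemma PL.prod {V W : Type*} [AddCommGroup V] [Module ℝ V] [MeasurableSpace V] [AddCommGroup W]
    [Module ℝ W] [MeasurableSpace W] {μ : Measure V} {ν : Measure W} [SFinite μ] [SFinite ν]
    (hμ : PL μ) (hν : PL ν) : PL (μ.prod ν) := by
  intro a b ha hb hab f g h hf hg hh H
  rw [lintegral_prod _ hf.aemeasurable, lintegral_prod _ hg.aemeasurable,
    lintegral_prod _ hh.aemeasurable]
  refine hμ a b ha hb hab _ _ _ hf.lintegral_prod_right' hg.lintegral_prod_right'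
    hh.lintegral_prod_right' fun x y => ?_
  refine hν a b ha hb hab _ _ _ (hf.comp measurable_prodMk_left) (hg.comp measurable_prodMk_left)
    (hh.comp measurable_prodMk_left) fun u v => ?_
  exact H (x, u) (y, v)

lemma PL.map {V W : Type*} [AddCommGroup V] [Module ℝ V] [MeasurableSpace V] [AddCommGroup W]
    [Module ℝ W] [MeasurableSpace W] {μ : Measure V} (hμ : PL μ) (L : V → W) (hL : Measurable L)
    (hl : ∀ (a b : ℝ) x y, L (a • x + b • y) = a • L x + b • L y) : PL (μ.map L) := by
  intro a b ha hb hab f g h hf hg hh H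
  rw [lintegral_map hf hL, lintegral_map hg hL, lintegral_map hh hL]
  refine hμ a b ha hb hab _ _ _ (hf.comp hL) (hg.comp hL) (hh.comp hL) fun x y => ?_
  simpa [hl] using H (L x) (L y)

lemma PL.smul {V : Type*} [AddCommGroup V] [Module ℝ V] [MeasurableSpace V] {μ : Measure V}
    (hμ : PL μ) (c : ℝ≥0∞) : PL (c • μ) := by
  intro a b ha hb hab f g h hf hg hh H
  simp only [lintegral_smul_measure, smul_eq_mul]
  rw [ENNReal.mul_rpow_of_nonneg _ _ ha.le, ENNReal.mul_rpow_of_nonneg _ _ hb.le, mul_mul_mul_comm,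
    ← ENNReal.rpow_add_of_nonneg _ _ ha.le hb.le, hab, ENNReal.rpow_one]
  gcongr
  exact hμ a b ha hb hab f g h hf hg hh H

lemma pl_pi (d : ℕ) : PL (volume : Measure (Fin d → ℝ)) := by
  induction d with
  | zero =>
    intro a b ha hb hab f g h hf hg hh H
    have hv : (volume : Measure (Fin 0 → ℝ)) univ = 1 := by simp [volume_pi]
    rw [lintegral_unique, lintegral_unique, lintegral_unique, hv]
    have h2 := H (@default _ Unique.instInhabited) (@default _ Unique.instInhabited)
    rw [Subsingleton.elim (a • (@default (Fin 0 → ℝ) Unique.instInhabited) +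
      b • (@default _ Unique.instInhabited)) (@default _ Unique.instInhabited)] at h2
    simpa only [mul_one] using h2
  | succ d ih =>
    have hp := (volume_preserving_piFinSuccAbove (fun _ : Fin (d + 1) => ℝ) 0).symm
    rw [← hp.map_eq]
    refine PL.map (PL.prod pl_real ih) _ (MeasurableEquiv.measurable _) ?_
    intro a b x y
    ext i
    refine Fin.cases ?_ (fun j => ?_) i <;> simp [MeasurableEquiv.piFinSuccAbove]

lemma pl_haar {V : Type*} [NormedAddCommGroup V] [NormedSpace ℝ V] [FiniteDimensional ℝ V]
    [MeasurableSpace V] [BorelSpace V] (μ : Measure V) [μ.IsAddHaarMeasure] : PL μ := by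
  let e := (Module.finBasis ℝ V).equivFunL.symm
  have h1 : PL ((volume : Measure (Fin (Module.finrank ℝ V) → ℝ)).map e) :=
    PL.map (pl_pi _) e e.continuous.measurable (fun a b x y => by simp)
  have : ((volume : Measure (Fin (Module.finrank ℝ V) → ℝ)).map e).IsAddHaarMeasure :=
    e.isAddHaarMeasure_map _
  rw [Measure.isAddLeftInvariant_eq_smul μ (volume.map e)]
  exact h1.smul (_ : NNReal)


def LC {V : Type*} [AddCommGroup V] [Module ℝ V] (f : V → ℝ≥0∞) : Prop :=
  ∀ a b : ℝ, 0 < a → 0 < b → a + b = 1 → ∀ x y, f x ^ a * f y ^ b ≤ f (a • x + b • y)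

section
variable {V : Type*} [NormedAddCommGroup V] [NormedSpace ℝ V] [FiniteDimensional ℝ V]
    [MeasurableSpace V] [BorelSpace V] (μ : Measure V) [μ.IsAddHaarMeasure]

lemma lint_scale {f : V → ℝ≥0∞} (hf : Measurable f) {r : ℝ} (hr : 0 < r) :
    ENNReal.ofReal (r ^ Module.finrank ℝ V) * ∫⁻ x, f (r • x) ∂μ = ∫⁻ x, f x ∂μ := by
  rw [← lintegral_map (μ := μ) hf (measurable_const_smul r), Measure.map_addHaar_smul μ hr.ne',
    lintegral_smul_measure, smul_eq_mul, ← mul_assoc, ← ENNReal.ofReal_mul (by positivity),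
    abs_of_pos (by positivity), mul_inv_cancel₀ (by positivity)]
  simp

lemma lint_scale_add {f : V → ℝ≥0∞} (hf : Measurable f) {r : ℝ} (hr : 0 < r) (x0 : V) :
    ENNReal.ofReal (r ^ Module.finrank ℝ V) * ∫⁻ x, f (x0 + r • x) ∂μ = ∫⁻ x, f x ∂μ := by
  rw [lint_scale μ (f := fun x => f (x0 + x)) (by fun_prop) hr, lintegral_add_left_eq_self]

lemma LC.rpow_le {f : V → ℝ≥0∞} (hf : LC f) (h0 : f 0 = 1) {t : ℝ} (ht0 : 0 < t) (ht1 : t < 1)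
    (x : V) : f x ^ t ≤ f (t • x) := by
  simpa [h0] using hf t (1 - t) ht0 (by linarith) (by ring) x 0

lemma enn_le_rpow {x : ℝ≥0∞} (hx : x ≤ 1) {t : ℝ} (ht1 : t ≤ 1) : x ≤ x ^ t := by
  simpa using ENNReal.rpow_le_rpow_of_exponent_ge hx ht1

lemma LC.mul_le {f : V → ℝ≥0∞} (hf : LC f) (h1 : ∀ x, f x ≤ 1) {a b : ℝ} (ha : 0 < a) (hb : 0 < b)
    (hab : a + b = 1) (x y : V) : f x * f y ≤ f (a • x + b • y) :=
  (mul_le_mul' (enn_le_rpow (h1 x) (by linarith)) (enn_le_rpow (h1 y) (by linarith))).trans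
    (hf a b ha hb hab x y)

/-- supergradient of a log-concave function at an interior point of its support -/
lemma LC.supergrad {G : V → ℝ≥0∞} (hG : LC G) (hpos : ∀ᶠ x in nhds (0 : V), 0 < G x)
    (h0 : G 0 ≠ ∞) : ∃ l : V →L[ℝ] ℝ, ∀ c, G c * ENNReal.ofReal (Real.exp (l c)) ≤ G 0 := by
  obtain ⟨r, hr, hball⟩ := Metric.eventually_nhds_iff_ball.1 hpos
  have small : ∀ x : V, ∃ e : ℝ, 0 < e ∧ e < 1 ∧ ‖e • x‖ < r := by
    intro x
    refine ⟨min (1/2) (r / (2 * (‖x‖ + 1))), by positivity, ?_, ?_⟩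
    · exact (min_le_left _ _).trans_lt (by norm_num)
    · rw [norm_smul, Real.norm_of_nonneg (by positivity)]
      calc _ ≤ r / (2 * (‖x‖ + 1)) * ‖x‖ := by gcongr; exact min_le_right _ _
        _ < r := by
          rw [div_mul_eq_mul_div, div_lt_iff₀ (by positivity)]
          nlinarith [norm_nonneg x]
  have hfin : ∀ x, G x ≠ ∞ := by
    intro x hx
    obtain ⟨e, he0, he1, hes⟩ := small x
    have hp := hball (-(e • x)) (by simpa using hes)
    have := hG (e / (1 + e)) (1 / (1 + e)) (by positivity) (by positivity)
      (by field_simp; ring) x (-(e • x))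
    rw [hx, ENNReal.top_rpow_of_pos (by positivity), ENNReal.top_mul] at this
    · have e0 : (e / (1 + e)) • x + (1 / (1 + e)) • -(e • x) = 0 := by
        rw [smul_neg, smul_smul, ← sub_eq_add_neg, ← sub_smul]
        have : e / (1 + e) - 1 / (1 + e) * e = 0 := by ring
        rw [this, zero_smul]
      rw [e0] at this
      exact h0 (top_le_iff.1 this)
    · exact (ENNReal.rpow_pos_of_nonneg hp (by positivity)).ne'
  set g : V → ℝ := fun x => Real.log (G x).toReal with hg
  have hgc : ∀ x y, 0 < G x → 0 < G y → ∀ a b : ℝ, 0 < a → 0 < b → a + b = 1 →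
      a * g x + b * g y ≤ g (a • x + b • y) := by
    intro x y hx hy a b ha hb hab
    have hx' := ENNReal.toReal_pos hx.ne' (hfin x)
    have hy' := ENNReal.toReal_pos hy.ne' (hfin y)
    have := ENNReal.toReal_mono (hfin _) (hG a b ha hb hab x y)
    rw [ENNReal.toReal_mul, ← ENNReal.toReal_rpow, ← ENNReal.toReal_rpow] at this
    have h2 := Real.log_le_log (by positivity) this
    rwa [Real.log_mul (by positivity) (by positivity), Real.log_rpow hx', Real.log_rpow hy'] at h2
  have hconc : ConcaveOn ℝ (ball (0 : V) r) g := by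
    refine concaveOn_iff_forall_pos.2 ⟨convex_ball _ _, ?_⟩
    intro x hx y hy a b ha hb hab
    exact hgc x y (hball x hx) (hball y hy) a b ha hb hab
  have hcont : ContinuousOn g (ball (0 : V) r) := hconc.continuousOn isOpen_ball
  set U : Set (V × ℝ) := {p | p.1 ∈ ball (0 : V) r ∧ p.2 < g p.1} with hU
  have hUo : IsOpen U := by
    have h1 : IsOpen ((Prod.fst : V × ℝ → V) ⁻¹' ball (0 : V) r) := isOpen_ball.preimage continuous_fst
    have h2 : ContinuousOn (fun p : V × ℝ => g p.1 - p.2) ((Prod.fst : V × ℝ → V) ⁻¹' ball (0 : V) r) :=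
      (hcont.comp continuousOn_fst (fun p hp => hp)).sub continuousOn_snd
    have h3 := h2.isOpen_inter_preimage h1 (isOpen_Ioi (a := (0:ℝ)))
    convert h3 using 1
    ext p; simp [hU]
  have hUc : Convex ℝ U := hconc.convex_strict_hypograph
  obtain ⟨L, hL⟩ := geometric_hahn_banach_open_point hUc hUo (x := ((0 : V), g 0))
    (by simp [hU])
  set L1 : V →L[ℝ] ℝ := L.comp (ContinuousLinearMap.inl ℝ V ℝ) with hL1
  set β := L (0, 1) with hβ
  have hLe : ∀ x t, L (x, t) = L1 x + β * t := by
    intro x t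
    have : (x, t) = (x, (0:ℝ)) + t • ((0 : V), (1:ℝ)) := by simp
    rw [this, map_add, map_smul, hL1, hβ]; simp [mul_comm]
  have hβ0 : 0 < β := by
    have := hL (0, g 0 - 1) ⟨by simpa using hr, by simp⟩
    rw [hLe, hLe] at this
    simp only [map_zero] at this
    linarith
  have hin : ∀ x ∈ ball (0 : V) r, g x + β⁻¹ * L1 x ≤ g 0 := by
    intro x hx
    have : L1 x + β * g x ≤ β * g 0 := by
      refine le_of_forall_pos_lt_add fun ε hε => ?_
      have := hL (x, g x - ε / β) ⟨hx, by simp; positivity⟩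
      rw [hLe, hLe, mul_sub, mul_div_cancel₀ _ hβ0.ne'] at this
      simp only [map_zero] at this
      linarith
    have h3 := mul_le_mul_of_nonneg_left this (inv_pos.2 hβ0).le
    rw [mul_add, ← mul_assoc, ← mul_assoc, inv_mul_cancel₀ hβ0.ne'] at h3
    linarith
  refine ⟨β⁻¹ • L1, fun c => ?_⟩
  rcases eq_or_ne (G c) 0 with hc | hc
  · simp [hc]
  have hc' : 0 < G c := pos_iff_ne_zero.2 hc
  have h00 : 0 < G 0 := hball 0 (by simpa using hr)
  obtain ⟨e, he0, he1, hes⟩ := small c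
  have h4 := hin (e • c) (by simpa using hes)
  have h5 := hgc c 0 hc' h00 e (1 - e) he0 (by linarith) (by ring)
  simp only [smul_zero, add_zero, map_smul, smul_eq_mul] at h4 h5
  have h6 : g c + β⁻¹ * L1 c ≤ g 0 := by
    have : e * (g c + β⁻¹ * L1 c) ≤ e * g 0 := by nlinarith
    exact le_of_mul_le_mul_left this he0
  have hcr := ENNReal.toReal_pos hc (hfin c)
  have h0r := ENNReal.toReal_pos h00.ne' h0
  rw [← ENNReal.ofReal_toReal (hfin c), ← ENNReal.ofReal_toReal h0, ← ENNReal.ofReal_mul hcr.le]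
  apply ENNReal.ofReal_le_ofReal
  have h7 := Real.exp_le_exp.2 h6
  rw [Real.exp_add, hg] at h7
  simpa [Real.exp_log hcr, Real.exp_log h0r] using h7
end

set_option linter.unusedSectionVars false
section
variable {A B : Type*} [NormedAddCommGroup A] [NormedSpace ℝ A] [FiniteDimensional ℝ A]
    [MeasurableSpace A] [BorelSpace A] (μ : Measure A) [μ.IsAddHaarMeasure]
    [NormedAddCommGroup B] [NormedSpace ℝ B] [FiniteDimensional ℝ B]
    [MeasurableSpace B] [BorelSpace B] (ν : Measure B) [ν.IsAddHaarMeasure]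

lemma rs_bound {f : A × B → ℝ≥0∞} (hf : LC f) (h1 : ∀ x, f x ≤ 1) (hl : LowerSemicontinuous f)
    {θ : ℝ} (hθ0 : 0 < θ) (hθ1 : θ < 1) (z0 : A) :
    (∫⁻ w, f (z0, w) ∂ν) * (ENNReal.ofReal (θ ^ Module.finrank ℝ A) *
      ENNReal.ofReal ((1 - θ) ^ Module.finrank ℝ B) * ∫⁻ z, ⨆ w, f (z, w) ∂μ) ≤
      ∫⁻ x, f x ∂(μ.prod ν) := by
  have hm : Measurable f := hl.measurable
  have hP : Measurable fun z => ⨆ w, f (z, w) :=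
    (lowerSemicontinuous_iSup fun w => hl.comp (by fun_prop : Continuous fun z : A => (z, w))).measurable
  have hF : Measurable fun z => ∫⁻ w, f (z, w) ∂ν := hm.lintegral_prod_right'
  have step : ∀ z, ENNReal.ofReal ((1 - θ) ^ Module.finrank ℝ B) * (∫⁻ w, f (z0, w) ∂ν) *
      (⨆ w, f (z, w)) ≤ ∫⁻ w, f ((1 - θ) • z0 + θ • z, w) ∂ν := by
    intro z
    rw [ENNReal.mul_iSup]
    refine iSup_le fun w' => ?_
    rw [← lint_scale_add ν (f := fun w => f ((1 - θ) • z0 + θ • z, w)) (by fun_prop)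
      (sub_pos.2 hθ1) (θ • w'), mul_assoc, ← lintegral_mul_const _ (by fun_prop)]
    gcongr with w
    have := hf.mul_le h1 (sub_pos.2 hθ1) hθ0 (by ring) (z0, w) (z, w')
    simpa [add_comm] using this
  rw [lintegral_prod _ hm.aemeasurable, ← lint_scale_add μ hF hθ0 ((1 - θ) • z0)]
  calc _ = ENNReal.ofReal (θ ^ Module.finrank ℝ A) * (ENNReal.ofReal ((1 - θ) ^ Module.finrank ℝ B) *
        (∫⁻ w, f (z0, w) ∂ν) * ∫⁻ z, ⨆ w, f (z, w) ∂μ) := by ring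
    _ ≤ _ := by
      rw [← lintegral_const_mul _ hP]
      gcongr with z
      exact step z

lemma cs_bound {f : A × B → ℝ≥0∞} (hm : Measurable f) (l : A × B →L[ℝ] ℝ) {X I : ℝ≥0∞}
    (hX0 : X ≠ 0) (hXt : X ≠ ∞) (hI0 : I ≠ 0) (hIt : I ≠ ∞)
    (hF : ∀ z, (∫⁻ w, f (z, w) ∂ν) * X ≤ I)
    (hc : I ≤ ∫⁻ x, f x * ENNReal.ofReal (Real.exp (2⁻¹ * l x)) ∂(μ.prod ν)) :
    I * X ≤ (∫⁻ z, (∫⁻ w, f (z, w) * ENNReal.ofReal (Real.exp (l (z, w))) ∂ν) ^ (2⁻¹ : ℝ) ∂μ) ^ 2 := by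
  have hlc := l.continuous
  have hlm : Measurable l := hlc.measurable
  set S := ∫⁻ z, (∫⁻ w, f (z, w) * ENNReal.ofReal (Real.exp (l (z, w))) ∂ν) ^ (2⁻¹ : ℝ) ∂μ
  have hG : Measurable fun x => f x * ENNReal.ofReal (Real.exp (l x)) := by fun_prop
  have hGm : Measurable fun z => ∫⁻ w, f (z, w) * ENNReal.ofReal (Real.exp (l (z, w))) ∂ν :=
    hG.lintegral_prod_right'
  have hF' : ∀ z, ∫⁻ w, f (z, w) ∂ν ≤ I / X := fun z =>
    (ENNReal.le_div_iff_mul_le (Or.inl hX0) (Or.inl hXt)).2 (hF z)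
  have hle : I ≤ (I / X) ^ (2⁻¹ : ℝ) * S := by
    refine hc.trans ?_
    rw [lintegral_prod _ (by fun_prop), ← lintegral_const_mul _ (hGm.pow_const _)]
    refine lintegral_mono fun z => ?_
    have hs : ∀ w, f (z, w) * ENNReal.ofReal (Real.exp (2⁻¹ * l (z, w))) =
        f (z, w) ^ (2⁻¹ : ℝ) * (f (z, w) * ENNReal.ofReal (Real.exp (l (z, w)))) ^ (2⁻¹ : ℝ) := by
      intro w
      rw [ENNReal.mul_rpow_of_nonneg _ _ (by norm_num), ← mul_assoc,
        ← ENNReal.rpow_add_of_nonneg _ _ (by norm_num) (by norm_num),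
        ENNReal.ofReal_rpow_of_pos (Real.exp_pos _), ← Real.exp_mul, mul_comm (l (z, w))]
      norm_num
    simp only [hs]
    have hol := ENNReal.lintegral_mul_le_Lp_mul_Lq ν (p := 2) (q := 2)
      (by rw [Real.holderConjugate_iff]; norm_num)
      (f := fun w => f (z, w) ^ (2⁻¹ : ℝ))
      (g := fun w => (f (z, w) * ENNReal.ofReal (Real.exp (l (z, w)))) ^ (2⁻¹ : ℝ))
      (by fun_prop) (by fun_prop)
    simp only [Pi.mul_apply, ← ENNReal.rpow_mul] at hol
    norm_num at hol
    norm_num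
    refine hol.trans ?_
    gcongr
    exact hF' z
  have h2 : I * I ≤ I / X * S ^ 2 := by
    calc I * I ≤ ((I / X) ^ (2⁻¹ : ℝ) * S) * ((I / X) ^ (2⁻¹ : ℝ) * S) := by gcongr
      _ = ((I / X) ^ (2⁻¹ : ℝ) * (I / X) ^ (2⁻¹ : ℝ)) * S ^ 2 := by ring
      _ = _ := by
        rw [← ENNReal.rpow_add_of_nonneg _ _ (by norm_num) (by norm_num)]; norm_num
  have h3 : X * (I * I) ≤ I * S ^ 2 := by
    calc _ ≤ X * (I / X * S ^ 2) := by gcongr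
      _ = (X * (I / X)) * S ^ 2 := by ring
      _ = _ := by rw [ENNReal.mul_div_cancel hX0 hXt]
  rw [← ENNReal.mul_le_mul_iff_right hI0 hIt]
  calc _ = X * (I * I) := by ring
    _ ≤ _ := h3

lemma cov {R : A × A → ℝ≥0∞} (hR : Measurable R) :
    ∫⁻ x, ∫⁻ y, R ((2⁻¹ : ℝ) • x + (2⁻¹ : ℝ) • y, (2⁻¹ : ℝ) • (y - x)) ∂μ ∂μ =
      ENNReal.ofReal (2 ^ Module.finrank ℝ A) * ∫⁻ c, ∫⁻ t, R (c, t) ∂μ ∂μ := by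
  have h1 : ∀ x, ∫⁻ y, R ((2⁻¹ : ℝ) • x + (2⁻¹ : ℝ) • y, (2⁻¹ : ℝ) • (y - x)) ∂μ =
      ENNReal.ofReal (2 ^ Module.finrank ℝ A) * ∫⁻ t, R (x + t, t) ∂μ := by
    intro x
    rw [← lint_scale_add μ (f := fun y => R ((2⁻¹ : ℝ) • x + (2⁻¹ : ℝ) • y, (2⁻¹ : ℝ) • (y - x)))
      (by fun_prop) (two_pos) x]
    congr 2
    ext t
    congr 2
    · rw [smul_add, smul_smul, ← add_assoc, ← add_smul]; norm_num
    · simp [smul_smul]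
  simp only [h1]
  rw [lintegral_const_mul _ (Measurable.lintegral_prod_right' (f := fun p : A × A => R (p.1 + p.2, p.2)) (by fun_prop)),
    lintegral_lintegral_swap (f := fun x t => R (x + t, t)) (by fun_prop),
    lintegral_lintegral_swap (f := fun x t => R (x, t)) (by fun_prop)]
  congr 2
  ext t
  exact lintegral_add_right_eq_self (fun x => R (x, t)) t
end

set_option linter.unusedSectionVars false
section
variable {A B : Type*} [NormedAddCommGroup A] [NormedSpace ℝ A] [FiniteDimensional ℝ A]
    [MeasurableSpace A] [BorelSpace A] (μ : Measure A) [μ.IsAddHaarMeasure]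
    [NormedAddCommGroup B] [NormedSpace ℝ B] [FiniteDimensional ℝ B]
    [MeasurableSpace B] [BorelSpace B] (ν : Measure B) [ν.IsAddHaarMeasure]

def Psi (f : A × B → ℝ≥0∞) (s : ℝ) (p : (A × B) × A) : ℝ≥0∞ :=
  ⨆ w : B, (min (f (p.1 + (p.2, w))) (f (p.1 - (p.2, w)))) ^ s

lemma psi_lsc {f : A × B → ℝ≥0∞} (hl : LowerSemicontinuous f) {s : ℝ} (hs : 0 < s) :
    LowerSemicontinuous (Psi f s) := by
  refine lowerSemicontinuous_iSup fun w => ?_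
  refine Continuous.comp_lowerSemicontinuous (g := fun x : ℝ≥0∞ => x ^ s)
    ENNReal.continuous_rpow_const ?_ (fun x y hxy => ENNReal.rpow_le_rpow hxy hs.le)
  exact (hl.comp (g := fun p : (A × B) × A => p.1 + (p.2, w)) (by fun_prop)).inf
    (hl.comp (g := fun p : (A × B) × A => p.1 - (p.2, w)) (by fun_prop))

lemma psi_lc {f : A × B → ℝ≥0∞} (hf : LC f) {s : ℝ} (hs : 0 < s) : LC (Psi f s) := by
  intro a b ha hb hab p q
  refine iSup_rpow_mul_le _ _ ha hb _ fun w1 w2 => ?_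
  refine le_trans ?_ (le_iSup _ (a • w1 + b • w2))
  rw [← ENNReal.rpow_mul, ← ENNReal.rpow_mul, mul_comm s, mul_comm s, ENNReal.rpow_mul,
    ENNReal.rpow_mul, ← ENNReal.mul_rpow_of_nonneg _ _ hs.le]
  apply ENNReal.rpow_le_rpow _ hs.le
  refine le_min ?_ ?_
  · calc _ ≤ f (p.1 + (p.2, w1)) ^ a * f (q.1 + (q.2, w2)) ^ b := by
          gcongr <;> exact min_le_left _ _
      _ ≤ _ := hf a b ha hb hab _ _
      _ = _ := by
        congr 1
        ext <;> simp <;> abel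
  · calc _ ≤ f (p.1 - (p.2, w1)) ^ a * f (q.1 - (q.2, w2)) ^ b := by
          gcongr <;> exact min_le_right _ _
      _ ≤ _ := hf a b ha hb hab _ _
      _ = _ := by
        congr 1
        ext <;> simp [smul_sub] <;> abel

lemma gam_lc {f : A × B → ℝ≥0∞} (hf : LC f) (hl : LowerSemicontinuous f) {s : ℝ} (hs : 0 < s) :
    LC fun c => ∫⁻ t, Psi f s (c, t) ∂μ := by
  intro a b ha hb hab x y
  have hm := (psi_lsc hl hs).measurable
  refine pl_haar μ a b ha hb hab _ _ _ (by fun_prop) (by fun_prop) (by fun_prop) fun t u => ?_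
  exact psi_lc hf hs a b ha hb hab (x, t) (y, u)

lemma gam_pos {f : A × B → ℝ≥0∞} (h0 : f 0 = 1) (hl : LowerSemicontinuous f) {s : ℝ} (hs : 0 < s) :
    ∀ᶠ c in nhds (0 : A × B), 0 < ∫⁻ t, Psi f s (c, t) ∂μ := by
  have h00 : (2⁻¹ : ℝ≥0∞) < Psi f s 0 := by
    refine lt_of_lt_of_le ?_ (le_iSup _ (0 : B))
    have h0' : f (0, 0) = 1 := h0
    simp [h0']
  have hev := psi_lsc hl hs 0 _ h00
  rw [show (0 : (A × B) × A) = (0, 0) from rfl, nhds_prod_eq, Filter.eventually_prod_iff] at hev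
  obtain ⟨p, hp, q, hq, hpq⟩ := hev
  filter_upwards [hp] with c hc
  obtain ⟨W, hW, hWo, hW0⟩ := _root_.eventually_nhds_iff.1 hq
  calc (0 : ℝ≥0∞) < 2⁻¹ * μ W := by
        have := hWo.measure_pos μ ⟨0, hW0⟩
        exact ENNReal.mul_pos (by simp) this.ne'
    _ = ∫⁻ t in W, 2⁻¹ ∂μ := by simp
    _ ≤ ∫⁻ t in W, Psi f s (c, t) ∂μ := setLIntegral_mono' hWo.measurableSet fun t ht =>
      (hpq hc (hW t ht)).le
    _ ≤ _ := setLIntegral_le_lintegral _ _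

lemma half_pl {f : A × B → ℝ≥0∞} (hf : LC f) (h1 : ∀ x, f x ≤ 1) (hl : LowerSemicontinuous f)
    (l : A × B →L[ℝ] ℝ) {θ : ℝ} (hθ0 : 0 < θ) (hθ1 : θ < 1) (x y : A) :
    (∫⁻ w, f (x, w) * ENNReal.ofReal (Real.exp (l (x, w))) ∂ν) ^ (2⁻¹ : ℝ) *
    (∫⁻ w, f (y, w) * ENNReal.ofReal (Real.exp (l (y, w))) ∂ν) ^ (2⁻¹ : ℝ) ≤
    ∫⁻ u, ENNReal.ofReal (Real.exp (l ((2⁻¹ : ℝ) • x + (2⁻¹ : ℝ) • y, u))) *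
      f ((2⁻¹ : ℝ) • x + (2⁻¹ : ℝ) • y, u) ^ (1 - θ) *
      Psi f (θ / 2) (((2⁻¹ : ℝ) • x + (2⁻¹ : ℝ) • y, u), (2⁻¹ : ℝ) • (y - x)) ∂ν := by
  have hm := hl.measurable
  have hlm : Measurable l := l.continuous.measurable
  have hpm := (psi_lsc hl (half_pos hθ0)).measurable
  refine pl_haar ν 2⁻¹ 2⁻¹ (by norm_num) (by norm_num) (by norm_num) _ _ _ (by fun_prop)
    (by fun_prop) (by fun_prop) fun u v => ?_
  set c : A × B := ((2⁻¹ : ℝ) • x + (2⁻¹ : ℝ) • y, (2⁻¹ : ℝ) • u + (2⁻¹ : ℝ) • v) with hc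
  set g := f (x, u) ^ (2⁻¹ : ℝ) * f (y, v) ^ (2⁻¹ : ℝ) with hg
  have hcc : c = (2⁻¹ : ℝ) • (x, u) + (2⁻¹ : ℝ) • (y, v) := by simp [hc]
  have hgc : g ≤ f c := by
    rw [hcc]; exact hf 2⁻¹ 2⁻¹ (by norm_num) (by norm_num) (by norm_num) _ _
  have hgm : g ≤ (min (f (x, u)) (f (y, v))) ^ (2⁻¹ : ℝ) := by
    rcases min_cases (f (x, u)) (f (y, v)) with h | h <;> rw [h.1, hg]
    · exact mul_le_of_le_one_right' (ENNReal.rpow_le_one (h1 _) (by norm_num))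
    · exact mul_le_of_le_one_left' (ENNReal.rpow_le_one (h1 _) (by norm_num))
  have hgP : g ^ θ ≤ Psi f (θ / 2) (c, (2⁻¹ : ℝ) • (y - x)) := by
    refine le_trans ?_ (le_iSup _ ((2⁻¹ : ℝ) • (v - u)))
    have e1 : c + ((2⁻¹ : ℝ) • (y - x), (2⁻¹ : ℝ) • (v - u)) = (y, v) := by
      simp only [hc, Prod.mk_add_mk, Prod.mk.injEq]
      constructor <;> module
    have e2 : c - ((2⁻¹ : ℝ) • (y - x), (2⁻¹ : ℝ) • (v - u)) = (x, u) := by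
      simp only [hc, Prod.mk_sub_mk, Prod.mk.injEq]
      constructor <;> module
    simp only [e1, e2]
    calc g ^ θ ≤ ((min (f (x, u)) (f (y, v))) ^ (2⁻¹ : ℝ)) ^ θ := by gcongr
      _ = _ := by rw [← ENNReal.rpow_mul, min_comm]; congr 1; ring
  calc _ = (ENNReal.ofReal (Real.exp (l (x, u))) ^ (2⁻¹ : ℝ) *
        ENNReal.ofReal (Real.exp (l (y, v))) ^ (2⁻¹ : ℝ)) * g := by
        rw [ENNReal.mul_rpow_of_nonneg _ _ (by norm_num), ENNReal.mul_rpow_of_nonneg _ _ (by norm_num), hg]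
        ring
    _ = ENNReal.ofReal (Real.exp (l c)) * (g ^ (1 - θ) * g ^ θ) := by
        rw [← ENNReal.rpow_add_of_nonneg _ _ (by linarith) hθ0.le, sub_add_cancel, ENNReal.rpow_one,
          ENNReal.ofReal_rpow_of_pos (Real.exp_pos _), ENNReal.ofReal_rpow_of_pos (Real.exp_pos _),
          ← ENNReal.ofReal_mul (by positivity), ← Real.exp_mul, ← Real.exp_mul, ← Real.exp_add, hcc,
          map_add, map_smul, map_smul, smul_eq_mul, smul_eq_mul, mul_comm (2⁻¹ : ℝ) (l (x, u)),
          mul_comm (2⁻¹ : ℝ) (l (y, v))]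
    _ ≤ ENNReal.ofReal (Real.exp (l c)) * (f c ^ (1 - θ) * Psi f (θ / 2) (c, (2⁻¹ : ℝ) • (y - x))) := by
        gcongr
    _ = _ := by rw [mul_assoc]

lemma s_sq {f : A × B → ℝ≥0∞} (hf : LC f) (h1 : ∀ x, f x ≤ 1) (hl : LowerSemicontinuous f)
    (l : A × B →L[ℝ] ℝ) {θ : ℝ} (hθ0 : 0 < θ) (hθ1 : θ < 1) :
    (∫⁻ z, (∫⁻ w, f (z, w) * ENNReal.ofReal (Real.exp (l (z, w))) ∂ν) ^ (2⁻¹ : ℝ) ∂μ) ^ 2 ≤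
    ENNReal.ofReal (2 ^ Module.finrank ℝ A) * ∫⁻ c, ENNReal.ofReal (Real.exp (l c)) *
      f c ^ (1 - θ) * ∫⁻ t, Psi f (θ / 2) (c, t) ∂μ ∂(μ.prod ν) := by
  have hm := hl.measurable
  have hlm : Measurable l := l.continuous.measurable
  have hpm := (psi_lsc hl (half_pos hθ0)).measurable
  have hG : Measurable fun x => f x * ENNReal.ofReal (Real.exp (l x)) := by fun_prop
  have hGm : Measurable fun z => ∫⁻ w, f (z, w) * ENNReal.ofReal (Real.exp (l (z, w))) ∂ν :=
    hG.lintegral_prod_right'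
  have hR : Measurable fun p : A × A => ∫⁻ u, ENNReal.ofReal (Real.exp (l (p.1, u))) *
      f (p.1, u) ^ (1 - θ) * Psi f (θ / 2) ((p.1, u), p.2) ∂ν :=
    Measurable.lintegral_prod_right' (f := fun q : (A × A) × B =>
      ENNReal.ofReal (Real.exp (l (q.1.1, q.2))) *
      f (q.1.1, q.2) ^ (1 - θ) * Psi f (θ / 2) ((q.1.1, q.2), q.1.2)) (by fun_prop)
  have hgam : Measurable fun c => ∫⁻ t, Psi f (θ / 2) (c, t) ∂μ := hpm.lintegral_prod_right'
  rw [sq, ← lintegral_mul_const _ (hGm.pow_const _)]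
  calc _ = _ := lintegral_congr fun x => (lintegral_const_mul _ (hGm.pow_const _)).symm
    _ ≤ _ := lintegral_mono fun x => lintegral_mono fun y => half_pl ν hf h1 hl l hθ0 hθ1 x y
    _ = _ := cov μ hR
    _ = _ := by
      congr 1
      rw [lintegral_prod _ (by fun_prop)]
      congr 1
      ext c
      rw [lintegral_lintegral_swap (by fun_prop)]
      congr 1
      ext u
      dsimp only
      rw [lintegral_const_mul _ (by fun_prop)]
end

set_option linter.unusedSectionVars false
section
variable {A B : Type*} [NormedAddCommGroup A] [NormedSpace ℝ A] [FiniteDimensional ℝ A]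
    [MeasurableSpace A] [BorelSpace A] (μ : Measure A) [μ.IsAddHaarMeasure]
    [NormedAddCommGroup B] [NormedSpace ℝ B] [FiniteDimensional ℝ B]
    [MeasurableSpace B] [BorelSpace B] (ν : Measure B) [ν.IsAddHaarMeasure]

lemma gam_zero {f : A × B → ℝ≥0∞} (hf : LC f) (h0 : f 0 = 1) (hl : LowerSemicontinuous f)
    {s : ℝ} (hs : 0 < s) (hs1 : s < 1) :
    ENNReal.ofReal (s ^ Module.finrank ℝ A) * ∫⁻ t, Psi f s (0, t) ∂μ ≤
      ∫⁻ z, ⨆ w, min (f (z, w)) (f (-z, -w)) ∂μ := by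
  have hD : Measurable fun z => ⨆ w, min (f (z, w)) (f (-z, -w)) :=
    (lowerSemicontinuous_iSup fun w =>
      (hl.comp (by fun_prop : Continuous fun z : A => (z, w))).inf
      (hl.comp (by fun_prop : Continuous fun z : A => (-z, -w)))).measurable
  rw [← lint_scale μ hD hs]
  gcongr with t
  refine iSup_le fun w => ?_
  refine le_trans ?_ (le_iSup _ (s • w))
  refine le_min ?_ ?_
  · calc _ ≤ f (t, w) ^ s := by
          gcongr; simp
      _ ≤ _ := hf.rpow_le h0 hs hs1 (t, w)
  · calc _ ≤ f (-(t, w)) ^ s := by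
          gcongr; simp
      _ ≤ _ := hf.rpow_le h0 hs hs1 _
      _ = _ := by simp

lemma core_theta {f : A × B → ℝ≥0∞} (hf : LC f) (h1 : ∀ x, f x ≤ 1) (h0 : f 0 = 1)
    (hl : LowerSemicontinuous f) (hI0 : ∫⁻ x, f x ∂(μ.prod ν) ≠ 0)
    (hIt : ∫⁻ x, f x ∂(μ.prod ν) ≠ ∞)
    (hc : ∀ l : A × B →L[ℝ] ℝ, ∫⁻ x, f x ∂(μ.prod ν) ≤
      ∫⁻ x, f x * ENNReal.ofReal (Real.exp (l x)) ∂(μ.prod ν))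
    {θ : ℝ} (hθ0 : 0 < θ) (hθ1 : θ < 1) :
    ENNReal.ofReal ((1 - θ) ^ (Module.finrank ℝ A + Module.finrank ℝ B)) *
      ENNReal.ofReal ((θ / 2) ^ Module.finrank ℝ A) *
      (ENNReal.ofReal (θ ^ Module.finrank ℝ A) *
      ENNReal.ofReal ((1 - θ) ^ Module.finrank ℝ B) * ∫⁻ z, ⨆ w, f (z, w) ∂μ) ≤
      ENNReal.ofReal (2 ^ Module.finrank ℝ A) * ∫⁻ z, ⨆ w, min (f (z, w)) (f (-z, -w)) ∂μ := by
  have hm := hl.measurable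
  have hs0 : 0 < θ / 2 := half_pos hθ0
  have hg0 := gam_zero μ hf h0 hl hs0 (by linarith)
  set G0 := ∫⁻ t, Psi f (θ / 2) (0, t) ∂μ with hG0
  set D := ∫⁻ z, ⨆ w, min (f (z, w)) (f (-z, -w)) ∂μ with hD
  rcases eq_or_ne D ∞ with hDt | hDt
  · rw [hDt, ENNReal.mul_top]
    · exact le_top
    · simp
  have hG0t : G0 ≠ ∞ := by
    intro h
    rw [h, ENNReal.mul_top] at hg0
    · exact hDt (top_le_iff.1 hg0)
    · simp; positivity
  have hrs := rs_bound μ ν hf h1 hl hθ0 hθ1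
  set X := ENNReal.ofReal (θ ^ Module.finrank ℝ A) *
      ENNReal.ofReal ((1 - θ) ^ Module.finrank ℝ B) * ∫⁻ z, ⨆ w, f (z, w) ∂μ with hX
  rcases eq_or_ne X 0 with hX0 | hX0
  · simp [hX0]
  have hXt : X ≠ ∞ := by
    intro h
    apply hI0
    rw [lintegral_prod _ hm.aemeasurable]
    have : ∀ z, ∫⁻ w, f (z, w) ∂ν = 0 := by
      intro z
      by_contra hz
      have := hrs z
      rw [h, ENNReal.mul_top hz] at this
      exact hIt (top_le_iff.1 this)
    simp [this]
  obtain ⟨l, hl'⟩ := (gam_lc μ hf hl hs0).supergrad (gam_pos μ h0 hl hs0) hG0t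
  set I := ∫⁻ x, f x ∂(μ.prod ν) with hI
  have e1 : I * X ≤ _ := cs_bound μ ν hm l hX0 hXt hI0 hIt hrs (by simpa using hc ((2⁻¹ : ℝ) • l))
  have e2 := s_sq μ ν hf h1 hl l hθ0 hθ1
  have e3 : ∫⁻ c, ENNReal.ofReal (Real.exp (l c)) *
      f c ^ (1 - θ) * ∫⁻ t, Psi f (θ / 2) (c, t) ∂μ ∂(μ.prod ν) ≤
      G0 * ∫⁻ c, f c ^ (1 - θ) ∂(μ.prod ν) := by
    rw [← lintegral_const_mul _ (by fun_prop)]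
    refine lintegral_mono fun c => ?_
    calc _ = ((∫⁻ t, Psi f (θ / 2) (c, t) ∂μ) * ENNReal.ofReal (Real.exp (l c))) * f c ^ (1 - θ) := by
          ring
      _ ≤ _ := by gcongr; exact hl' c
  have e4 : ENNReal.ofReal ((1 - θ) ^ (Module.finrank ℝ A + Module.finrank ℝ B)) *
      ∫⁻ c, f c ^ (1 - θ) ∂(μ.prod ν) ≤ I := by
    rw [hI, ← lint_scale (μ.prod ν) hm (sub_pos.2 hθ1), Module.finrank_prod]
    gcongr with c
    exact hf.rpow_le h0 (sub_pos.2 hθ1) (by linarith) c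
  have e5 := (e1.trans e2).trans (mul_le_mul' le_rfl e3)
  rw [← ENNReal.mul_le_mul_iff_right hI0 hIt]
  calc _ = ENNReal.ofReal ((1 - θ) ^ (Module.finrank ℝ A + Module.finrank ℝ B)) *
      ENNReal.ofReal ((θ / 2) ^ Module.finrank ℝ A) * (I * X) := by ring
    _ ≤ ENNReal.ofReal ((1 - θ) ^ (Module.finrank ℝ A + Module.finrank ℝ B)) *
      ENNReal.ofReal ((θ / 2) ^ Module.finrank ℝ A) * (ENNReal.ofReal (2 ^ Module.finrank ℝ A) *
        (G0 * ∫⁻ c, f c ^ (1 - θ) ∂(μ.prod ν))) := by gcongr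
    _ = (ENNReal.ofReal ((1 - θ) ^ (Module.finrank ℝ A + Module.finrank ℝ B)) *
          ∫⁻ c, f c ^ (1 - θ) ∂(μ.prod ν)) * (ENNReal.ofReal (2 ^ Module.finrank ℝ A) *
          (ENNReal.ofReal ((θ / 2) ^ Module.finrank ℝ A) * G0)) := by ring
    _ ≤ I * (ENNReal.ofReal (2 ^ Module.finrank ℝ A) * D) := by gcongr

lemma num_bound (k m : ℕ) (hk : 1 ≤ k) {θ : ℝ} (hθ : θ = k / (2 * (k + m : ℕ))) :
    (2 : ℝ) ^ k ≤ (128 * (((k + m : ℕ) : ℝ) / k) ^ 2) ^ k *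
      ((1 - θ) ^ (k + m) * (θ / 2) ^ k * (θ ^ k * (1 - θ) ^ m)) := by
  have hk' : (0 : ℝ) < k := by exact_mod_cast hk
  have hm' : (0 : ℝ) ≤ m := by positivity
  have hn : (0 : ℝ) < ((k + m : ℕ) : ℝ) := by push_cast; linarith
  have hθ0 : 0 < θ := by rw [hθ]; positivity
  have hθ1 : θ ≤ 1 / 2 := by
    rw [hθ, div_le_div_iff₀ (by positivity) (by norm_num)]; push_cast; linarith
  have hlow : Real.exp (-(2 * θ)) ≤ 1 - θ := by
    have h1 : 1 + 2 * θ ≤ Real.exp (2 * θ) := by linarith [Real.add_one_le_exp (2 * θ)]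
    rw [Real.exp_neg]
    apply inv_le_of_inv_le₀ (by linarith)
    refine le_trans ?_ h1
    rw [inv_le_iff_one_le_mul₀ (by linarith)]
    nlinarith
  have hp : (1 / 8 : ℝ) ^ k ≤ (1 - θ) ^ (k + m) * (1 - θ) ^ (k + m) := by
    rw [← pow_add]
    calc (1 / 8 : ℝ) ^ k ≤ (Real.exp (-2)) ^ k := by
          gcongr
          rw [Real.exp_neg, one_div]
          apply inv_anti₀ (Real.exp_pos _)
          have := Real.exp_one_lt_d9
          have h2 : Real.exp 2 = Real.exp 1 * Real.exp 1 := by rw [← Real.exp_add]; norm_num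
          rw [h2]; nlinarith [Real.exp_pos 1]
      _ = (Real.exp (-(2 * θ))) ^ (k + m + (k + m)) := by
          rw [← Real.exp_nat_mul, ← Real.exp_nat_mul]
          congr 1
          rw [hθ]; push_cast
          have : (k : ℝ) + m ≠ 0 := by positivity
          field_simp
          ring
      _ ≤ _ := by gcongr
  have hp2 : (1 / 8 : ℝ) ^ k ≤ (1 - θ) ^ (k + m) * (1 - θ) ^ m := by
    refine hp.trans ?_
    have h0 : 0 ≤ 1 - θ := by linarith
    exact mul_le_mul_of_nonneg_left (pow_le_pow_of_le_one h0 (by linarith) (by omega))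
      (by positivity)
  have e : (128 * (((k + m : ℕ) : ℝ) / k) ^ 2) * (θ / 2 * θ) = 16 := by
    rw [hθ]; field_simp; norm_num
  calc (2 : ℝ) ^ k = 16 ^ k * (1 / 8) ^ k := by rw [← mul_pow]; norm_num
    _ ≤ 16 ^ k * ((1 - θ) ^ (k + m) * (1 - θ) ^ m) := by gcongr
    _ = _ := by rw [← e, mul_pow, mul_pow (θ / 2)]; ring

theorem core {f : A × B → ℝ≥0∞} (hf : LC f) (h1 : ∀ x, f x ≤ 1) (h0 : f 0 = 1)
    (hl : LowerSemicontinuous f) (hI0 : ∫⁻ x, f x ∂(μ.prod ν) ≠ 0)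
    (hIt : ∫⁻ x, f x ∂(μ.prod ν) ≠ ∞)
    (hc : ∀ l : A × B →L[ℝ] ℝ, ∫⁻ x, f x ∂(μ.prod ν) ≤
      ∫⁻ x, f x * ENNReal.ofReal (Real.exp (l x)) ∂(μ.prod ν))
    (hk : 1 ≤ Module.finrank ℝ A) :
    ∫⁻ z, ⨆ w, f (z, w) ∂μ ≤ ENNReal.ofReal ((128 * (((Module.finrank ℝ A + Module.finrank ℝ B : ℕ) : ℝ) /
      Module.finrank ℝ A) ^ 2) ^ Module.finrank ℝ A) *
      ∫⁻ z, ⨆ w, min (f (z, w)) (f (-z, -w)) ∂μ := by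
  set k := Module.finrank ℝ A with hkdef
  set m := Module.finrank ℝ B with hmdef
  obtain ⟨θ, hθ⟩ : ∃ θ : ℝ, θ = k / (2 * (k + m : ℕ)) := ⟨_, rfl⟩
  have hk' : (0 : ℝ) < k := by exact_mod_cast hk
  have hn : (0 : ℝ) < ((k + m : ℕ) : ℝ) := by push_cast; positivity
  have hθ0 : 0 < θ := by rw [hθ]; positivity
  have hθ1 : θ < 1 := by
    rw [hθ, div_lt_one (by positivity)]; push_cast
    have : (0 : ℝ) ≤ m := by positivity
    linarith
  have key := core_theta μ ν hf h1 h0 hl hI0 hIt hc hθ0 hθ1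
  have hnum := num_bound k m hk hθ
  rw [← hkdef, ← hmdef] at key
  have h1θ : 0 < 1 - θ := by linarith
  set P := ∫⁻ z, ⨆ w, f (z, w) ∂μ
  set D := ∫⁻ z, ⨆ w, min (f (z, w)) (f (-z, -w)) ∂μ
  have e2 : ENNReal.ofReal (2 ^ k) ≠ 0 := by simp
  rw [← ENNReal.mul_le_mul_iff_right e2 ENNReal.ofReal_ne_top]
  calc ENNReal.ofReal (2 ^ k) * P ≤ ENNReal.ofReal ((128 * (((k + m : ℕ) : ℝ) / k) ^ 2) ^ k *
      ((1 - θ) ^ (k + m) * (θ / 2) ^ k * (θ ^ k * (1 - θ) ^ m))) * P := by gcongr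
    _ = ENNReal.ofReal ((128 * (((k + m : ℕ) : ℝ) / k) ^ 2) ^ k) *
      (ENNReal.ofReal ((1 - θ) ^ (k + m)) * ENNReal.ofReal ((θ / 2) ^ k) *
      (ENNReal.ofReal (θ ^ k) * ENNReal.ofReal ((1 - θ) ^ m) * P)) := by
        rw [ENNReal.ofReal_mul (by positivity), ENNReal.ofReal_mul (by positivity),
          ENNReal.ofReal_mul (by positivity), ENNReal.ofReal_mul (by positivity)]
        ring
    _ ≤ ENNReal.ofReal ((128 * (((k + m : ℕ) : ℝ) / k) ^ 2) ^ k) * (ENNReal.ofReal (2 ^ k) * D) := by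
        gcongr
    _ = _ := by ring

lemma iSup_lc {f : A × B → ℝ≥0∞} (hf : LC f) : LC fun z => ⨆ w, f (z, w) := by
  intro a b ha hb hab x y
  refine iSup_rpow_mul_le _ _ ha hb _ fun w1 w2 => ?_
  exact (hf a b ha hb hab (x, w1) (y, w2)).trans (le_iSup (fun w => f (a • x + b • y, w)) _)

lemma diff_bound {P : A → ℝ≥0∞} (hP : LC P) (hm : Measurable P) (h0 : ∫⁻ x, P x ∂μ ≠ 0)
    (ht : ∫⁻ x, P x ∂μ ≠ ∞) :
    ∫⁻ z, ⨆ b, P (b + z) ^ (2⁻¹ : ℝ) * P b ^ (2⁻¹ : ℝ) ∂μ ≤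
      ENNReal.ofReal (4 ^ Module.finrank ℝ A) * ∫⁻ x, P x ∂μ := by
  set k := Module.finrank ℝ A with hk
  have step : ∀ z, (⨆ b, P (b + z) ^ (2⁻¹ : ℝ) * P b ^ (2⁻¹ : ℝ)) * ∫⁻ x, P x ∂μ ≤
      ENNReal.ofReal (2 ^ k) * ∫⁻ u, P (u + (2⁻¹ : ℝ) • z) * P u ∂μ := by
    intro z
    rw [ENNReal.iSup_mul]
    refine iSup_le fun b => ?_
    have hsc := lint_scale_add μ (f := fun u => P (u + (2⁻¹ : ℝ) • z) * P u) (by fun_prop)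
      (r := 2⁻¹) (by norm_num) ((2⁻¹ : ℝ) • b)
    rw [← hsc, ← mul_assoc, ← ENNReal.ofReal_mul (by positivity), ← hk, ← mul_pow,
      ← lintegral_const_mul _ hm, mul_inv_cancel₀ (by norm_num : (2 : ℝ) ≠ 0), one_pow,
      ENNReal.ofReal_one, one_mul]
    refine lintegral_mono fun a => ?_
    have e1 := hP 2⁻¹ 2⁻¹ (by norm_num) (by norm_num) (by norm_num) (b + z) a
    have e2 := hP 2⁻¹ 2⁻¹ (by norm_num) (by norm_num) (by norm_num) b a
    calc P (b + z) ^ (2⁻¹ : ℝ) * P b ^ (2⁻¹ : ℝ) * P a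
        = (P (b + z) ^ (2⁻¹ : ℝ) * P a ^ (2⁻¹ : ℝ)) * (P b ^ (2⁻¹ : ℝ) * P a ^ (2⁻¹ : ℝ)) := by
          have : P a = P a ^ (2⁻¹ : ℝ) * P a ^ (2⁻¹ : ℝ) := by
            rw [← ENNReal.rpow_add_of_nonneg _ _ (by norm_num) (by norm_num)]; norm_num
          conv_lhs => rw [this]
          ring
      _ ≤ _ := mul_le_mul' e1 e2
      _ = _ := by
        congr 2
        module
  rw [← ENNReal.mul_le_mul_iff_left h0 ht]
  have hQ : Measurable fun y => ∫⁻ u, P (u + y) * P u ∂μ :=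
    Measurable.lintegral_prod_right' (f := fun p : A × A => P (p.2 + p.1) * P p.2) (by fun_prop)
  calc _ ≤ ∫⁻ z, (⨆ b, P (b + z) ^ (2⁻¹ : ℝ) * P b ^ (2⁻¹ : ℝ)) * ∫⁻ x, P x ∂μ ∂μ :=
        lintegral_mul_const_le _ _
    _ ≤ ∫⁻ z, ENNReal.ofReal (2 ^ k) * ∫⁻ u, P (u + (2⁻¹ : ℝ) • z) * P u ∂μ ∂μ := lintegral_mono step
    _ = ENNReal.ofReal (2 ^ k) * ∫⁻ z, ∫⁻ u, P (u + (2⁻¹ : ℝ) • z) * P u ∂μ ∂μ := by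
        rw [lintegral_const_mul]
        exact hQ.comp (measurable_const_smul (2⁻¹ : ℝ))
    _ = ENNReal.ofReal (4 ^ k) * ∫⁻ z, ∫⁻ u, P (u + z) * P u ∂μ ∂μ := by
        rw [← lint_scale μ hQ (r := 2⁻¹) (by norm_num), ← hk, ← mul_assoc,
          ← ENNReal.ofReal_mul (by positivity), ← mul_pow]
        norm_num
    _ = ENNReal.ofReal (4 ^ k) * ∫⁻ u, ∫⁻ z, P (u + z) * P u ∂μ ∂μ := by
        rw [lintegral_lintegral_swap (by fun_prop)]
    _ = ENNReal.ofReal (4 ^ k) * ((∫⁻ x, P x ∂μ) * ∫⁻ x, P x ∂μ) := by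
        congr 1
        rw [← lintegral_const_mul _ hm]
        congr 1
        ext u
        rw [lintegral_mul_const _ (by fun_prop), lintegral_add_left_eq_self]
    _ = _ := by ring

lemma lint_pos_of_lsc {g : A → ℝ≥0∞} (hl : LowerSemicontinuous g) (h0 : 0 < g 0) :
    ∫⁻ x, g x ∂μ ≠ 0 := by
  have ho : IsOpen {x | 0 < g x} := hl.isOpen_preimage 0
  intro h
  rw [lintegral_eq_zero_iff hl.measurable] at h
  have : μ {x | 0 < g x} = 0 := by
    rw [Filter.EventuallyEq, ae_iff] at h
    convert h using 2
    ext x; simp [pos_iff_ne_zero]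
  exact (ho.measure_pos μ ⟨0, h0⟩).ne' this

theorem core_out {f : A × B → ℝ≥0∞} (hf : LC f) (h1 : ∀ x, f x ≤ 1) (h0 : f 0 = 1)
    (hl : LowerSemicontinuous f) (hI0 : ∫⁻ x, f x ∂(μ.prod ν) ≠ 0)
    (hIt : ∫⁻ x, f x ∂(μ.prod ν) ≠ ∞)
    (hc : ∀ l : A × B →L[ℝ] ℝ, ∫⁻ x, f x ∂(μ.prod ν) ≤
      ∫⁻ x, f x * ENNReal.ofReal (Real.exp (l x)) ∂(μ.prod ν))
    (hk : 1 ≤ Module.finrank ℝ A) :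
    ∫⁻ z, ⨆ b, (⨆ w, f (b + z, w)) ^ (2⁻¹ : ℝ) * (⨆ w, f (b, w)) ^ (2⁻¹ : ℝ) ∂μ ≤
      ENNReal.ofReal ((512 * (((Module.finrank ℝ A + Module.finrank ℝ B : ℕ) : ℝ) /
      Module.finrank ℝ A) ^ 2) ^ Module.finrank ℝ A) *
      ∫⁻ z, ⨆ w, min (f (z, w)) (f (-z, -w)) ∂μ := by
  have hcore := core μ ν hf h1 h0 hl hI0 hIt hc hk
  set D := ∫⁻ z, ⨆ w, min (f (z, w)) (f (-z, -w)) ∂μ with hD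
  set k := Module.finrank ℝ A with hkdef
  have hk' : (0 : ℝ) < k := by exact_mod_cast hk
  have hn : (0 : ℝ) < ((k + Module.finrank ℝ B : ℕ) : ℝ) := by push_cast; positivity
  rcases eq_or_ne D ∞ with hDt | hDt
  · rw [hDt, ENNReal.mul_top]
    · exact le_top
    · simp only [ne_eq, ENNReal.ofReal_eq_zero, not_le]; positivity
  have hPl : LowerSemicontinuous fun z => ⨆ w, f (z, w) :=
    lowerSemicontinuous_iSup fun w => hl.comp (by fun_prop : Continuous fun z : A => (z, w))
  have hP0 : ∫⁻ z, ⨆ w, f (z, w) ∂μ ≠ 0 := by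
    refine lint_pos_of_lsc μ hPl ?_
    refine lt_of_lt_of_le ?_ (le_iSup _ (0 : B))
    have h0' : f (0, 0) = 1 := h0
    simp [h0']
  have hPt : ∫⁻ z, ⨆ w, f (z, w) ∂μ ≠ ∞ :=
    ne_top_of_le_ne_top (ENNReal.mul_ne_top ENNReal.ofReal_ne_top hDt) hcore
  refine (diff_bound μ (iSup_lc hf) hPl.measurable hP0 hPt).trans ?_
  calc _ ≤ ENNReal.ofReal (4 ^ k) * _ := mul_le_mul' le_rfl hcore
    _ = _ := by
      rw [← mul_assoc, ← ENNReal.ofReal_mul (by positivity), ← mul_pow, ← mul_assoc]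
      norm_num
end

set_option linter.unusedSectionVars false
section
variable {E : Type*} [NormedAddCommGroup E] [NormedSpace ℝ E] [FiniteDimensional ℝ E]
    [MeasurableSpace E] [BorelSpace E] (μ : Measure E) [μ.IsAddHaarMeasure]

structure RLC (f : E → ℝ) : Prop where
  nn : ∀ x, 0 ≤ f x
  lc : ∀ x y : E, ∀ a b : ℝ, 0 ≤ a → 0 ≤ b → a + b = 1 → f x ^ a * f y ^ b ≤ f (a • x + b • y)
  mx : ∀ x, f x ≤ f 0
  pos0 : 0 < f 0

lemma pos_of_int {f : E → ℝ} {x : E} (hx : x ∈ interior {x | 0 < f x}) : 0 < f x := by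
  have h2 : x ∈ {x | 0 < f x} := interior_subset hx
  exact h2

lemma RLC.convex {f : E → ℝ} (h : RLC f) : Convex ℝ {x | 0 < f x} := by
  intro x hx y hy a b ha hb hab
  simp only [mem_ofPred_eq] at hx hy ⊢
  exact lt_of_lt_of_le (by positivity) (h.lc x y a b ha hb hab)

lemma RLC.cont {f : E → ℝ} (h : RLC f) : ContinuousOn f (interior {x | 0 < f x}) := by
  have hc : ConcaveOn ℝ (interior {x | 0 < f x}) fun x => Real.log (f x) := by
    refine ⟨h.convex.interior, ?_⟩
    intro x hx y hy a b ha hb hab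
    have hx' : 0 < f x := pos_of_int hx
    have hy' : 0 < f y := pos_of_int hy
    have := Real.log_le_log (by positivity) (h.lc x y a b ha hb hab)
    rwa [Real.log_mul (by positivity) (by positivity), Real.log_rpow hx', Real.log_rpow hy'] at this
  have h2 : ContinuousOn (fun x => Real.exp (Real.log (f x))) (interior {x | 0 < f x}) :=
    Real.continuous_exp.comp_continuousOn (hc.continuousOn isOpen_interior)
  refine h2.congr fun x hx => ?_
  have hx' : 0 < f x := pos_of_int hx
  exact (Real.exp_log hx').symm

lemma RLC.null {f : E → ℝ} (h : RLC f) : μ ({x | 0 < f x} \ interior {x | 0 < f x}) = 0 :=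
  measure_mono_null (by
    rw [frontier]; exact sdiff_subset_sdiff_left subset_closure) (h.convex.addHaar_frontier μ)

lemma RLC.int_nonempty {f : E → ℝ} (h : RLC f) (hpos : 0 < ∫ x, f x ∂μ) :
    (interior {x | 0 < f x}).Nonempty := by
  by_contra hne
  rw [not_nonempty_iff_eq_empty] at hne
  have h0 := h.null μ
  rw [hne, sdiff_empty] at h0
  have : f =ᵐ[μ] 0 := by
    rw [Filter.EventuallyEq, ae_iff]
    refine measure_mono_null ?_ h0
    intro x hx
    exact lt_of_le_of_ne (h.nn x) (Ne.symm hx)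
  rw [integral_congr_ae this] at hpos
  simp at hpos

lemma RLC.decay {f : E → ℝ} (h : RLC f) (hi : Integrable f μ) (hpos : 0 < ∫ x, f x ∂μ) {δ : ℝ}
    (hδ : 0 < δ) : ∃ R : ℝ, 0 < R ∧ ∀ x, R ≤ ‖x‖ → f x ≤ δ := by
  obtain ⟨x0, hx0⟩ := h.int_nonempty μ hpos
  have hfx0 : 0 < f x0 := pos_of_int hx0
  have hca : ContinuousAt f x0 := h.cont.continuousAt (isOpen_interior.mem_nhds hx0)
  have hev : ∀ᶠ x in nhds x0, f x0 / 2 < f x := hca.eventually (lt_mem_nhds (by linarith))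
  obtain ⟨r, hr, hball⟩ := Metric.eventually_nhds_iff_ball.1 hev
  set t := f x0 / 2 with ht
  have ht0 : 0 < t := by positivity
  set lam := μ.withDensity (fun x => ENNReal.ofReal (f x)) with hlam
  have hfin : IsFiniteMeasure lam := isFiniteMeasure_withDensity_ofReal hi.2
  set s : ℕ → Set E := fun N => {y | (N : ℝ) ≤ ‖y‖} with hs
  have hsm : ∀ N, MeasurableSet (s N) := fun N => measurableSet_le measurable_const measurable_norm
  have hanti : Antitone s := by
    intro M N hMN y hy
    have : (M : ℝ) ≤ N := by exact_mod_cast hMN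
    exact this.trans hy
  have hlim := tendsto_measure_iInter_atTop (μ := lam) (s := s)
    (fun N => (hsm N).nullMeasurableSet) hanti ⟨0, measure_ne_top _ _⟩
  have hint : ⋂ N, s N = ∅ := by
    ext y
    simp only [mem_iInter, mem_empty_iff_false, iff_false, not_forall]
    obtain ⟨N, hN⟩ := exists_nat_gt ‖y‖
    exact ⟨N, not_le.2 hN⟩
  rw [hint, measure_empty] at hlim
  set v := μ (ball (0 : E) (r / 2)) with hv
  have hv0 : 0 < v := measure_ball_pos μ _ (by positivity)
  set ε := ENNReal.ofReal (Real.sqrt (δ * t)) * v with hε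
  have hε0 : 0 < ε := ENNReal.mul_pos (by simp; positivity) hv0.ne'
  obtain ⟨N, hN⟩ := ((hlim.eventually (gt_mem_nhds hε0)).exists)
  refine ⟨2 * N + ‖x0‖ + r + 1, by positivity, fun x hx => ?_⟩
  by_contra hcon
  have hcon := not_le.1 hcon
  set c := (2⁻¹ : ℝ) • x + (2⁻¹ : ℝ) • x0 with hc
  have hsub : ball c (r / 2) ⊆ s N := by
    intro y hy
    have h1 : ‖y - c‖ < r / 2 := by simpa [dist_eq_norm] using hy
    have h2 : ‖x‖ ≤ 2 * ‖y‖ + 2 * ‖y - c‖ + ‖x0‖ := by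
      have : x = (2 : ℝ) • y - (2 : ℝ) • (y - c) - x0 := by rw [hc]; module
      calc ‖x‖ = ‖(2 : ℝ) • y - (2 : ℝ) • (y - c) - x0‖ := by rw [← this]
        _ ≤ ‖(2 : ℝ) • y‖ + ‖(2 : ℝ) • (y - c)‖ + ‖x0‖ :=
          (norm_sub_le _ _).trans (by gcongr; exact norm_sub_le _ _)
        _ = _ := by simp [norm_smul]
    show (N : ℝ) ≤ ‖y‖
    linarith
  have hlow : ∀ y ∈ ball c (r / 2), ENNReal.ofReal (Real.sqrt (δ * t)) ≤ ENNReal.ofReal (f y) := by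
    intro y hy
    apply ENNReal.ofReal_le_ofReal
    have h1 : ‖y - c‖ < r / 2 := by simpa [dist_eq_norm] using hy
    set u := x0 + (2 : ℝ) • (y - c) with hu
    have hub : u ∈ ball x0 r := by
      simp only [mem_ball, dist_eq_norm, hu, add_sub_cancel_left, norm_smul, Real.norm_ofNat]
      linarith
    have e : (2⁻¹ : ℝ) • x + (2⁻¹ : ℝ) • u = y := by rw [hu, hc]; module
    have := h.lc x u 2⁻¹ 2⁻¹ (by norm_num) (by norm_num) (by norm_num)
    rw [e] at this
    refine le_trans ?_ this
    rw [Real.sqrt_eq_rpow, Real.mul_rpow hδ.le ht0.le]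
    norm_num
    have hfx := h.nn x
    gcongr
    exact (hball u hub).le
  have : ε ≤ lam (s N) := by
    calc ε = ∫⁻ y in ball c (r / 2), ENNReal.ofReal (Real.sqrt (δ * t)) ∂μ := by
          rw [setLIntegral_const, hε, hv, Measure.addHaar_ball_center μ c]
      _ ≤ ∫⁻ y in ball c (r / 2), ENNReal.ofReal (f y) ∂μ :=
          setLIntegral_mono' measurableSet_ball hlow
      _ = lam (ball c (r / 2)) := (withDensity_apply _ measurableSet_ball).symm
      _ ≤ _ := measure_mono hsub
  exact absurd hN (not_lt.2 this)

lemma RLC.norm_mul_le {f : E → ℝ} (h : RLC f) (hi : Integrable f μ) (hpos : 0 < ∫ x, f x ∂μ) :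
    ∃ R : ℝ, 0 < R ∧ ∀ x, ‖x‖ * f x ≤ R * f 0 := by
  have hp := h.pos0
  obtain ⟨R, hR, hd⟩ := h.decay μ hi hpos (δ := f 0 * Real.exp (-1)) (by positivity)
  refine ⟨R, hR, fun x => ?_⟩
  rcases le_or_gt ‖x‖ R with hx | hx
  · exact mul_le_mul hx (h.mx x) (h.nn x) hR.le
  rcases (h.nn x).eq_or_lt with h0 | h0
  · rw [← h0]; simp; positivity
  have hxp : 0 < ‖x‖ := hR.trans hx
  have hs1 : R / ‖x‖ < 1 := (div_lt_one hxp).2 hx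
  have hs0 : 0 < R / ‖x‖ := by positivity
  have h1 := hd ((R / ‖x‖) • x) (by
    rw [norm_smul, Real.norm_of_nonneg hs0.le, div_mul_cancel₀ _ hxp.ne'])
  have h2 := h.lc x 0 (R / ‖x‖) (1 - R / ‖x‖) hs0.le (by linarith) (by ring)
  rw [smul_zero, add_zero] at h2
  have h3 := Real.log_le_log (by positivity) (h2.trans h1)
  rw [Real.log_mul (by positivity) (by positivity), Real.log_rpow h0, Real.log_rpow hp,
    Real.log_mul hp.ne' (Real.exp_pos _).ne', Real.log_exp] at h3
  have h4 : R / ‖x‖ * (Real.log (f x) - Real.log (f 0)) ≤ -1 := by linarith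
  have h5 : 1 / (R / ‖x‖) ≤ Real.log (f 0) - Real.log (f x) := by
    rw [div_le_iff₀ hs0]; linarith
  have h6 : ‖x‖ / R ≤ f 0 / f x := by
    rw [one_div_div] at h5
    calc ‖x‖ / R ≤ Real.exp (‖x‖ / R) := by linarith [Real.add_one_le_exp (‖x‖ / R)]
      _ ≤ Real.exp (Real.log (f 0) - Real.log (f x)) := Real.exp_le_exp.2 h5
      _ = _ := by rw [Real.exp_sub, Real.exp_log hp, Real.exp_log h0]
  rw [div_le_div_iff₀ hR h0] at h6
  linarith

lemma RLC.half {f : E → ℝ} (h : RLC f) (x : E) : f x * f 0 ≤ f ((2⁻¹ : ℝ) • x) ^ 2 := by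
  have h2 := h.lc x 0 2⁻¹ 2⁻¹ (by norm_num) (by norm_num) (by norm_num)
  rw [smul_zero, add_zero] at h2
  have e : ∀ y : ℝ, 0 ≤ y → y ^ (2⁻¹ : ℝ) = Real.sqrt y := by
    intro y _; rw [Real.sqrt_eq_rpow]; norm_num
  rw [e _ (h.nn x), e _ (h.nn 0)] at h2
  calc f x * f 0 = (Real.sqrt (f x) * Real.sqrt (f 0)) ^ 2 := by
        rw [mul_pow, Real.sq_sqrt (h.nn x), Real.sq_sqrt (h.nn 0)]
    _ ≤ _ := by gcongr

lemma RLC.half_le {f : E → ℝ} (h : RLC f) (x : E) : f x ≤ f ((2⁻¹ : ℝ) • x) := by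
  have h1 := h.half x
  have h2 : f x ^ 2 ≤ f ((2⁻¹ : ℝ) • x) ^ 2 := by nlinarith [h.mx x, h.nn x]
  exact le_of_sq_le_sq h2 (h.nn _)

lemma RLC.integrable_smul {f : E → ℝ} (h : RLC f) (hi : Integrable f μ) (hpos : 0 < ∫ x, f x ∂μ) :
    Integrable (fun x => f x • x) μ := by
  obtain ⟨R, hR, hb⟩ := h.norm_mul_le μ hi hpos
  have hg : Integrable (fun x => 2 * R * f ((2⁻¹ : ℝ) • x)) μ :=
    (hi.comp_smul (by norm_num : (2⁻¹ : ℝ) ≠ 0)).const_mul _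
  refine hg.mono' (hi.aestronglyMeasurable.smul aestronglyMeasurable_id) ?_
  refine Filter.Eventually.of_forall fun x => ?_
  rw [norm_smul, Real.norm_of_nonneg (h.nn x)]
  have h1 := h.half x
  have h2 := hb ((2⁻¹ : ℝ) • x)
  rw [norm_smul, Real.norm_of_nonneg (by norm_num)] at h2
  have h3 := h.nn ((2⁻¹ : ℝ) • x)
  have hp := h.pos0
  have h4 : (f x * ‖x‖) * f 0 ≤ (2 * R * f ((2⁻¹ : ℝ) • x)) * f 0 := by
    nlinarith [norm_nonneg x, mul_le_mul_of_nonneg_left h2 h3, mul_le_mul_of_nonneg_left h1 (norm_nonneg x)]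
  exact le_of_mul_le_mul_right h4 hp

lemma RLC.integral_lin {f : E → ℝ} (h : RLC f) (hi : Integrable f μ) (hpos : 0 < ∫ x, f x ∂μ)
    (hc : ∫ x, f x • x ∂μ = 0) (l : E →L[ℝ] ℝ) :
    Integrable (fun x => f x * l x) μ ∧ ∫ x, f x * l x ∂μ = 0 := by
  have h1 := h.integrable_smul μ hi hpos
  have h2 := l.integrable_comp h1
  have h3 := l.integral_comp_comm h1
  simp only [map_smul, smul_eq_mul, hc, map_zero] at h2 h3
  exact ⟨h2, h3⟩

lemma RLC.zero_mem {f : E → ℝ} (h : RLC f) (hi : Integrable f μ) (hpos : 0 < ∫ x, f x ∂μ)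
    (hc : ∫ x, f x • x ∂μ = 0) : (0 : E) ∈ interior {x | 0 < f x} := by
  by_contra h0
  obtain ⟨l, hl⟩ := geometric_hahn_banach_open_point h.convex.interior isOpen_interior h0
  obtain ⟨h1, h2⟩ := h.integral_lin μ hi hpos hc l
  have hae : ∀ᵐ x ∂μ, x ∈ interior {x | 0 < f x} ∨ f x = 0 := by
    have := h.null μ
    rw [measure_eq_zero_iff_ae_notMem] at this
    filter_upwards [this] with x hx
    by_cases hx1 : x ∈ interior {x | 0 < f x}
    · exact Or.inl hx1
    · right
      by_contra hne
      exact hx ⟨lt_of_le_of_ne (h.nn x) (Ne.symm hne), hx1⟩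
  have h3 : (0 : E → ℝ) ≤ᵐ[μ] fun x => -(f x * l x) := by
    filter_upwards [hae] with x hx
    rcases hx with hx | hx
    · have := hl x hx
      rw [map_zero] at this
      have := h.nn x
      simp only [Pi.zero_apply]
      nlinarith
    · simp [hx]
  have h4 : ∫ x, -(f x * l x) ∂μ = 0 := by rw [integral_neg, h2, neg_zero]
  have h5 := (integral_eq_zero_iff_of_nonneg_ae h3 h1.neg).1 h4
  have h6 : f =ᵐ[μ] 0 := by
    filter_upwards [hae, h5] with x hx hx5
    rcases hx with hx | hx
    · have hlx := hl x hx
      rw [map_zero] at hlx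
      simp only [Pi.zero_apply, neg_eq_zero, mul_eq_zero] at hx5
      rcases hx5 with hx5 | hx5
      · exact hx5
      · linarith
    · exact hx
  rw [integral_congr_ae h6] at hpos
  simp at hpos

/-- the regularized normalized function -/
def reg (f : E → ℝ) (x : E) : ℝ≥0∞ :=
  (interior {x | 0 < f x}).indicator (fun x => ENNReal.ofReal (f x / f 0)) x

lemma reg_lc {f : E → ℝ} (h : RLC f) : LC (reg f) := by
  intro a b ha hb hab x y
  by_cases hx : x ∈ interior {x | 0 < f x}
  swap
  · simp [reg, indicator_of_notMem hx, ha]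
  by_cases hy : y ∈ interior {x | 0 < f x}
  swap
  · simp [reg, indicator_of_notMem hy, hb]
  have hxy := h.convex.interior hx hy ha.le hb.le hab
  have hp := h.pos0
  have hx0 : 0 < f x := pos_of_int hx
  have hy0 : 0 < f y := pos_of_int hy
  rw [reg, reg, reg, indicator_of_mem hx, indicator_of_mem hy, indicator_of_mem hxy,
    ENNReal.ofReal_rpow_of_pos (by positivity), ENNReal.ofReal_rpow_of_pos (by positivity),
    ← ENNReal.ofReal_mul (by positivity)]
  apply ENNReal.ofReal_le_ofReal
  rw [Real.div_rpow hx0.le hp.le, Real.div_rpow hy0.le hp.le, div_mul_div_comm,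
    ← Real.rpow_add hp, hab, Real.rpow_one]
  gcongr
  exact h.lc x y a b ha.le hb.le hab

lemma reg_lsc {f : E → ℝ} (h : RLC f) : LowerSemicontinuous (reg f) := by
  intro x y hy
  by_cases hx : x ∈ interior {x | 0 < f x}
  · have hn := isOpen_interior.mem_nhds hx
    have hca : ContinuousAt f x := h.cont.continuousAt hn
    have h2 : ContinuousAt (fun x => ENNReal.ofReal (f x / f 0)) x :=
      ENNReal.continuous_ofReal.continuousAt.comp (hca.div_const _)
    have h3 : reg f =ᶠ[nhds x] fun x => ENNReal.ofReal (f x / f 0) := by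
      filter_upwards [hn] with z hz
      rw [reg, indicator_of_mem hz]
    have h4 : ContinuousAt (reg f) x := h2.congr h3.symm
    exact h4.eventually (lt_mem_nhds hy)
  · rw [reg, indicator_of_notMem hx] at hy
    exact absurd hy (not_lt.2 (zero_le))

lemma reg_le {f : E → ℝ} (h : RLC f) (x : E) : reg f x ≤ ENNReal.ofReal (f x / f 0) := by
  rw [reg]
  exact indicator_le_self _ _ x

lemma reg_le_one {f : E → ℝ} (h : RLC f) (x : E) : reg f x ≤ 1 := by
  refine (reg_le h x).trans ?_
  rw [ENNReal.ofReal_le_one]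
  exact (div_le_one h.pos0).2 (h.mx x)

lemma reg_zero {f : E → ℝ} (h : RLC f) (h0 : (0 : E) ∈ interior {x | 0 < f x}) : reg f 0 = 1 := by
  rw [reg, indicator_of_mem h0, div_self h.pos0.ne', ENNReal.ofReal_one]

lemma le_reg_half {f : E → ℝ} (h : RLC f) (h0 : (0 : E) ∈ interior {x | 0 < f x}) (x : E) :
    ENNReal.ofReal (f x / f 0) ≤ reg f ((2⁻¹ : ℝ) • x) := by
  have hp := h.pos0
  rcases (h.nn x).eq_or_lt with hx | hx
  · simp [← hx]
  have hm : (2⁻¹ : ℝ) • x ∈ interior {x | 0 < f x} := by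
    have := h.convex.combo_interior_self_mem_interior h0 (y := x) hx (a := 2⁻¹) (b := 2⁻¹)
      (by norm_num) (by norm_num) (by norm_num)
    simpa using this
  rw [reg, indicator_of_mem hm]
  apply ENNReal.ofReal_le_ofReal
  gcongr
  exact h.half_le x

lemma reg_ae {f : E → ℝ} (h : RLC f) : reg f =ᵐ[μ] fun x => ENNReal.ofReal (f x / f 0) := by
  have := h.null μ
  rw [measure_eq_zero_iff_ae_notMem] at this
  filter_upwards [this] with x hx
  by_cases hx1 : x ∈ interior {x | 0 < f x}
  · rw [reg, indicator_of_mem hx1]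
  · rw [reg, indicator_of_notMem hx1]
    have : f x ≤ 0 := by
      by_contra hc
      exact hx ⟨not_le.1 hc, hx1⟩
    rw [ENNReal.ofReal_of_nonpos]
    exact div_nonpos_of_nonpos_of_nonneg this h.pos0.le

lemma reg_int {f : E → ℝ} (h : RLC f) (hi : Integrable f μ) :
    ∫⁻ x, reg f x ∂μ = ENNReal.ofReal (∫ x, f x / f 0 ∂μ) := by
  rw [lintegral_congr_ae (reg_ae μ h), ofReal_integral_eq_lintegral_ofReal (hi.div_const _)]
  exact Filter.Eventually.of_forall fun x => div_nonneg (h.nn x) h.pos0.le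

lemma ofReal_int_le {g : E → ℝ} (hg : Integrable g μ) :
    ENNReal.ofReal (∫ x, g x ∂μ) ≤ ∫⁻ x, ENNReal.ofReal (g x) ∂μ := by
  have h1 : ∫ x, g x ∂μ ≤ ∫ x, max (g x) 0 ∂μ :=
    integral_mono hg hg.pos_part fun x => le_max_left _ _
  refine (ENNReal.ofReal_le_ofReal h1).trans ?_
  rw [ofReal_integral_eq_lintegral_ofReal hg.pos_part
    (Filter.Eventually.of_forall fun x => le_max_right _ _)]
  refine lintegral_mono fun x => ?_
  simp [ENNReal.ofReal_max]

lemma reg_cent {f : E → ℝ} (h : RLC f) (hi : Integrable f μ) (hpos : 0 < ∫ x, f x ∂μ)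
    (hc : ∫ x, f x • x ∂μ = 0) (l : E →L[ℝ] ℝ) :
    ∫⁻ x, reg f x ∂μ ≤ ∫⁻ x, reg f x * ENNReal.ofReal (Real.exp (l x)) ∂μ := by
  obtain ⟨h1, h2⟩ := h.integral_lin μ hi hpos hc l
  have hp := h.pos0
  have e1 : ∫ x, f x / f 0 ∂μ = ∫ x, (f x / f 0 + (f x * l x) / f 0) ∂μ := by
    rw [integral_add (hi.div_const _) (h1.div_const _), integral_div (f 0) (fun x => f x * l x), h2]
    simp
  rw [reg_int μ h hi, e1]
  refine (ofReal_int_le μ ((hi.div_const _).add (h1.div_const _))).trans ?_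
  refine lintegral_mono_ae ?_
  filter_upwards [reg_ae μ h] with x hx
  have hx0 := h.nn x
  rw [hx, ← ENNReal.ofReal_mul (by positivity)]
  apply ENNReal.ofReal_le_ofReal
  have := Real.add_one_le_exp (l x)
  calc f x / f 0 + f x * l x / f 0 = f x / f 0 * (l x + 1) := by ring
    _ ≤ _ := by gcongr
end


lemma IsGeomLogConcave.rlc {n : ℕ} {f : EuclideanSpace ℝ (Fin n) → ℝ} (hf : IsGeomLogConcave f) :
    RLC f where
  nn := hf.nonneg
  lc := hf.logConcave
  mx := hf.maxAtZero
  pos0 := by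
    by_contra h0
    have : ∀ x, f x = 0 := fun x =>
      le_antisymm ((hf.maxAtZero x).trans (not_lt.1 h0)) (hf.nonneg x)
    have h2 := hf.integral_pos
    simp [this] at h2

lemma ofReal_sSup_le {S : Set ℝ} {M : ℝ≥0∞} (h : ∀ s ∈ S, ENNReal.ofReal s ≤ M) :
    ENNReal.ofReal (sSup S) ≤ M := by
  rcases eq_or_ne M ∞ with hM | hM
  · rw [hM]; exact le_top
  · apply ENNReal.ofReal_le_of_le_toReal
    refine Real.sSup_le (fun s hs => ?_) ENNReal.toReal_nonneg
    exact (ENNReal.ofReal_le_iff_le_toReal hM).1 (h s hs)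

section
variable {n : ℕ} (H : Submodule ℝ (EuclideanSpace ℝ (Fin n)))

def phiH : (H × Hᗮ) ≃L[ℝ] EuclideanSpace ℝ (Fin n) :=
  (Submodule.prodEquivOfIsCompl H Hᗮ
    H.isCompl_orthogonal).toContinuousLinearEquiv

lemma phiH_apply (p : H × Hᗮ) : phiH H p = (p.1 : EuclideanSpace ℝ (Fin n)) + p.2 := by
  simp [phiH]

lemma out_le {f : EuclideanSpace ℝ (Fin n) → ℝ} (h : RLC f)
    (h0 : (0 : EuclideanSpace ℝ (Fin n)) ∈ interior {x | 0 < f x}) (z : H) :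
    ENNReal.ofReal (funProj H (deltaOut f) z) ≤ ENNReal.ofReal (f 0) *
      ⨆ b, (⨆ w, reg f (phiH H (b + z, w))) ^ (2⁻¹ : ℝ) * (⨆ w, reg f (phiH H (b, w))) ^ (2⁻¹ : ℝ) := by
  have hp := h.pos0
  refine ofReal_sSup_le ?_
  rintro s ⟨y, hy, rfl⟩
  refine ofReal_sSup_le ?_
  rintro t ⟨x1, x2, hx, rfl⟩
  have e1 : ENNReal.ofReal (Real.sqrt (f x1 * f (-x2))) = ENNReal.ofReal (f 0) *
      (ENNReal.ofReal (f x1 / f 0) ^ (2⁻¹ : ℝ) * ENNReal.ofReal (f (-x2) / f 0) ^ (2⁻¹ : ℝ)) := by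
    have ha := h.nn x1
    have hb := h.nn (-x2)
    rw [ENNReal.ofReal_rpow_of_nonneg (by positivity) (by norm_num),
      ENNReal.ofReal_rpow_of_nonneg (by positivity) (by norm_num),
      ← ENNReal.ofReal_mul (by positivity), ← ENNReal.ofReal_mul (by positivity)]
    congr 1
    rw [← Real.mul_rpow (by positivity) (by positivity), div_mul_div_comm, ← sq, inv_eq_one_div,
      ← Real.sqrt_eq_rpow, Real.sqrt_div (by positivity), Real.sqrt_sq hp.le,
      mul_div_cancel₀ _ hp.ne']
  rw [e1]
  gcongr
  obtain ⟨p, hpx⟩ := (phiH H).surjective ((2⁻¹ : ℝ) • x1)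
  obtain ⟨q, hqx⟩ := (phiH H).surjective ((2⁻¹ : ℝ) • (-x2))
  have hpq : p = q + (z, ⟨y, hy⟩) := by
    apply (phiH H).injective
    rw [map_add, hpx, hqx, phiH_apply]
    simp only
    rw [add_comm (z : EuclideanSpace ℝ (Fin n)), hx]
    module
  refine le_trans ?_ (le_iSup _ q.1)
  have hp1 : p = (q.1 + z, p.2) := by rw [hpq]; rfl
  gcongr
  · refine (le_reg_half h h0 x1).trans ?_
    rw [← hpx, hp1]
    exact le_iSup (fun w => reg f (phiH H (q.1 + z, w))) _
  · refine (le_reg_half h h0 (-x2)).trans ?_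
    rw [← hqx]
    exact le_iSup (fun w => reg f (phiH H (q.1, w))) q.2

lemma in_ge {f : EuclideanSpace ℝ (Fin n) → ℝ} (h : RLC f) (z : H) :
    ENNReal.ofReal (f 0) * ⨆ w, min (reg f (phiH H (z, w))) (reg f (phiH H (-z, -w))) ≤
      ENNReal.ofReal (funProj H (deltaIn f) z) := by
  have hp := h.pos0
  rw [ENNReal.mul_iSup]
  refine iSup_le fun w => ?_
  have e : phiH H (-z, -w) = -phiH H (z, w) := by rw [← map_neg]; rfl
  rw [e]
  calc _ ≤ ENNReal.ofReal (f 0) * ENNReal.ofReal (deltaIn f (phiH H (z, w)) / f 0) := by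
        gcongr
        rw [deltaIn, ← min_div_div_right hp.le, ENNReal.ofReal_min]
        exact min_le_min (reg_le h _) (reg_le h _)
    _ = ENNReal.ofReal (deltaIn f (phiH H (z, w))) := by
        rw [← ENNReal.ofReal_mul hp.le, mul_div_cancel₀ _ hp.ne']
    _ ≤ _ := by
        apply ENNReal.ofReal_le_ofReal
        refine le_csSup ⟨f 0, ?_⟩ ⟨w, w.2, ?_⟩
        · rintro s ⟨y, -, rfl⟩
          exact (min_le_left _ _).trans (h.mx _)
        · simp only [phiH_apply]
          rw [add_comm]

lemma lint_H (g : EuclideanSpace ℝ (Fin n) → ℝ≥0∞) (d : ℝ) (hd : 0 ≤ d) :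
    ∫⁻ x in (H : Set (EuclideanSpace ℝ (Fin n))), g x ∂μH[d] = ∫⁻ x : H, g x ∂μH[d] := by
  have h1 := (isometry_subtype_coe (s := (H : Set (EuclideanSpace ℝ (Fin n))))).map_hausdorffMeasure
    (d := d) (Or.inl hd)
  rw [Subtype.range_coe] at h1
  rw [← h1]
  exact (MeasurableEmbedding.subtype_coe H.closed_of_finiteDimensional.measurableSet).lintegral_map g

lemma main_int {f : EuclideanSpace ℝ (Fin n) → ℝ} (hf : IsGeomLogConcave f) {k : ℕ} (hk : 1 ≤ k)
    (hH : Module.finrank ℝ H = k) :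
    ∫⁻ x in (H : Set (EuclideanSpace ℝ (Fin n))),
      ENNReal.ofReal (funProj H (deltaOut f) x) ∂μH[(k : ℝ)] ≤
    ENNReal.ofReal ((512 * ((n : ℝ) / k) ^ 2) ^ k) *
      ∫⁻ x in (H : Set (EuclideanSpace ℝ (Fin n))),
        ENNReal.ofReal (funProj H (deltaIn f) x) ∂μH[(k : ℝ)] := by
  have h := hf.rlc
  have h0 := h.zero_mem volume hf.integrable hf.integral_pos hf.centered
  rw [lint_H H (fun x => ENNReal.ofReal (funProj H (deltaOut f) x)) k (by positivity),
    lint_H H (fun x => ENNReal.ofReal (funProj H (deltaIn f) x)) k (by positivity)]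
  have hHaar : (μH[(k : ℝ)] : Measure H).IsAddHaarMeasure := by
    rw [← hH]; exact isAddHaarMeasure_hausdorffMeasure
  set μ : Measure H := μH[(k : ℝ)] with hμ
  set ν : Measure Hᗮ := volume with hν
  have hfin : Module.finrank ℝ H + Module.finrank ℝ Hᗮ = n := by
    rw [Submodule.finrank_add_finrank_orthogonal]; simp
  have hmapH : ((μ.prod ν).map (phiH H)).IsAddHaarMeasure := (phiH H).isAddHaarMeasure_map _
  have hphim : Measurable (phiH H) := (phiH H).continuous.measurable
  obtain ⟨c, hc⟩ : ∃ c : NNReal, (μ.prod ν).map (phiH H) = (c : ℝ≥0∞) • volume :=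
    ⟨_, Measure.isAddLeftInvariant_eq_smul _ _⟩
  have hconv : ∀ g : EuclideanSpace ℝ (Fin n) → ℝ≥0∞, Measurable g →
      ∫⁻ p, g (phiH H p) ∂(μ.prod ν) = c * ∫⁻ x, g x := by
    intro g hg
    rw [← lintegral_map hg hphim, hc, lintegral_smul_measure, smul_eq_mul]
  have hgl := reg_lsc h
  have hlsc : LowerSemicontinuous fun p => reg f (phiH H p) := hgl.comp (phiH H).continuous
  have hz : reg f (phiH H 0) = 1 := by rw [map_zero]; exact reg_zero h h0
  have key := core_out μ ν (f := fun p => reg f (phiH H p)) ?_ (fun p => reg_le_one h _) hz hlsc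
    ?_ ?_ ?_ (by rw [hH]; exact hk)
  · rw [hfin, hH] at key
    calc _ ≤ ∫⁻ z, ENNReal.ofReal (f 0) * (⨆ b, (⨆ w, reg f (phiH H (b + z, w))) ^ (2⁻¹ : ℝ) *
          (⨆ w, reg f (phiH H (b, w))) ^ (2⁻¹ : ℝ)) ∂μ := lintegral_mono (out_le H h h0)
      _ = ENNReal.ofReal (f 0) * ∫⁻ z, (⨆ b, (⨆ w, reg f (phiH H (b + z, w))) ^ (2⁻¹ : ℝ) *
          (⨆ w, reg f (phiH H (b, w))) ^ (2⁻¹ : ℝ)) ∂μ :=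
          lintegral_const_mul' _ _ ENNReal.ofReal_ne_top
      _ ≤ _ := mul_le_mul' le_rfl key
      _ = ENNReal.ofReal ((512 * ((n : ℝ) / k) ^ 2) ^ k) * (ENNReal.ofReal (f 0) *
          ∫⁻ z, ⨆ w, min (reg f (phiH H (z, w))) (reg f (phiH H (-z, -w))) ∂μ) := by ring
      _ = ENNReal.ofReal ((512 * ((n : ℝ) / k) ^ 2) ^ k) * 
          ∫⁻ z, ENNReal.ofReal (f 0) *
            ⨆ w, min (reg f (phiH H (z, w))) (reg f (phiH H (-z, -w))) ∂μ := by
          rw [lintegral_const_mul' _ _ ENNReal.ofReal_ne_top]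
      _ ≤ _ := mul_le_mul' le_rfl (lintegral_mono (in_ge H h))
  · intro a b ha hb hab x y
    have := reg_lc h a b ha hb hab (phiH H x) (phiH H y)
    simpa using this
  · exact lint_pos_of_lsc (μ.prod ν) hlsc (by rw [hz]; exact one_pos)
  · rw [hconv _ hgl.measurable, reg_int volume h hf.integrable]
    exact ENNReal.mul_ne_top ENNReal.coe_ne_top ENNReal.ofReal_ne_top
  · intro l
    have h1 := reg_cent volume h hf.integrable hf.integral_pos hf.centered
      (l.comp ((phiH H).symm : EuclideanSpace ℝ (Fin n) →L[ℝ] (H × Hᗮ)))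
    have h2 := hconv (fun x => reg f x * ENNReal.ofReal (Real.exp (l ((phiH H).symm x)))) (by
      have := hgl.measurable
      have h3 : Measurable fun x => l ((phiH H).symm x) :=
        (l.continuous.comp (phiH H).symm.continuous).measurable
      fun_prop)
    simp only [ContinuousLinearEquiv.symm_apply_apply] at h2
    rw [hconv _ hgl.measurable, h2]
    exact mul_le_mul' le_rfl h1
end

/-- Theorem (functional projections inequality):
`(∫_H P_H(Δ_out f))^{1/k} ≤ C·(n/k)²·(log n)³ · (∫_H P_H(Δ_in f))^{1/k}`
for geometric log-concave `f`. -/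
theorem stmt7 :
    ∃ C : ℝ, 0 < C ∧ ∀ (n : ℕ), 2 ≤ n →
      ∀ f : EuclideanSpace ℝ (Fin n) → ℝ, IsGeomLogConcave f →
        ∀ k : ℕ, 1 ≤ k → k ≤ n - 1 →
          ∀ H : Submodule ℝ (EuclideanSpace ℝ (Fin n)), Module.finrank ℝ H = k →
            (∫⁻ x in (H : Set (EuclideanSpace ℝ (Fin n))),
                ENNReal.ofReal (funProj H (deltaOut f) x) ∂μH[(k : ℝ)]) ^ ((k : ℝ)⁻¹) ≤
              ENNReal.ofReal (C * ((n : ℝ) / k) ^ 2 * (Real.log n) ^ 3) *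
                (∫⁻ x in (H : Set (EuclideanSpace ℝ (Fin n))),
                  ENNReal.ofReal (funProj H (deltaIn f) x) ∂μH[(k : ℝ)]) ^ ((k : ℝ)⁻¹) := by
  have hlog2 : 0 < Real.log 2 := Real.log_pos (by norm_num)
  refine ⟨512 / (Real.log 2) ^ 3, by positivity, ?_⟩
  intro n hn f hf k hk hkn H hH
  have key := main_int H hf hk hH
  have hk' : (0 : ℝ) < k := by exact_mod_cast hk
  have hlog : Real.log 2 ≤ Real.log n := Real.log_le_log (by norm_num) (by exact_mod_cast hn)
  refine (ENNReal.rpow_le_rpow key (by positivity)).trans ?_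
  rw [ENNReal.mul_rpow_of_nonneg _ _ (by positivity),
    ENNReal.ofReal_rpow_of_nonneg (by positivity) (by positivity),
    Real.pow_rpow_inv_natCast (by positivity) (by omega)]
  refine mul_le_mul' (ENNReal.ofReal_le_ofReal ?_) le_rfl
  calc 512 * ((n : ℝ) / k) ^ 2 = 512 / Real.log 2 ^ 3 * ((n : ℝ) / k) ^ 2 * Real.log 2 ^ 3 := by
        field_simp
    _ ≤ _ := by gcongr
end
end

section
/- Let K be a convex body in ℝ^n with 0 in its interior, let A > 0, and suppose that N(B₂ⁿ, t·K) ≤ exp(A·n/t²) for every t > 0, where N denotes the covering number. Then for every 1 ≤ k ≤ n−1 and every k-dimensional linear subspace H of ℝ^n, vol_k(B_H) ≤ e^k · A^{k/2} · (n/k)^{k/2} · vol_k(P_H(K)); equivalently 1 ≤ e·√A·√(n/k) · vrad(P_H(K)). -/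
open MeasureTheory Metric Set
open scoped ENNReal RealInnerProductSpace Pointwise

noncomputable section

/-- The covering number `N(A, B)`: the least number of translates of `B` needed to cover `A`. -/
def covN {n : ℕ} (A B : Set (EuclideanSpace ℝ (Fin n))) : ℕ∞ :=
  sInf ((fun s : Finset (EuclideanSpace ℝ (Fin n)) => (s.card : ℕ∞)) ''
    {s | A ⊆ ⋃ x ∈ s, (fun b => x + b) '' B})

/-- The orthogonal projection of a set onto a subspace, viewed inside the ambient space. -/
def projSet {n : ℕ} (H : Submodule ℝ (EuclideanSpace ℝ (Fin n)))
    (A : Set (EuclideanSpace ℝ (Fin n))) : Set (EuclideanSpace ℝ (Fin n)) :=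
  (fun x => (Submodule.orthogonalProjectionOnto H x : EuclideanSpace ℝ (Fin n))) '' A

/-- The volume radius of a subset of a `k`-dimensional subspace `H`: the `k`-th root of the
ratio of its `k`-dimensional (Hausdorff) volume to that of the unit ball of `H`. -/
def vrad {n : ℕ} (k : ℕ) (H : Submodule ℝ (EuclideanSpace ℝ (Fin n)))
    (A : Set (EuclideanSpace ℝ (Fin n))) : ℝ≥0∞ :=
  (μH[(k : ℝ)] A / μH[(k : ℝ)] (closedBall (0 : EuclideanSpace ℝ (Fin n)) 1 ∩ (H : Set _)))
    ^ ((k : ℝ)⁻¹)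

/-- Dual Sudakov-type covering hypothesis implies a lower volume bound for projections:
`vol_k(B_H) ≤ e^k·A^{k/2}·(n/k)^{k/2}·vol_k(P_H(K))`, equivalently
`1 ≤ e·√A·√(n/k)·vrad(P_H(K))`. -/
theorem stmt13 (n : ℕ) (K : Set (EuclideanSpace ℝ (Fin n)))
    (hK : IsCompact K) (hKc : Convex ℝ K) (h0 : (0 : EuclideanSpace ℝ (Fin n)) ∈ interior K)
    (A : ℝ) (hA : 0 < A)
    (hcov : ∀ t : ℝ, 0 < t →
      (covN (closedBall (0 : EuclideanSpace ℝ (Fin n)) 1) (t • K) : ℝ≥0∞) ≤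
        ENNReal.ofReal (Real.exp (A * n / t ^ 2))) :
    ∀ k : ℕ, 1 ≤ k → k ≤ n - 1 →
      ∀ H : Submodule ℝ (EuclideanSpace ℝ (Fin n)), Module.finrank ℝ H = k →
        μH[(k : ℝ)] (closedBall (0 : EuclideanSpace ℝ (Fin n)) 1 ∩ (H : Set _)) ≤
            ENNReal.ofReal (Real.exp 1 ^ k * A ^ ((k : ℝ) / 2) * ((n : ℝ) / k) ^ ((k : ℝ) / 2)) *
              μH[(k : ℝ)] (projSet H K) ∧
          1 ≤ ENNReal.ofReal (Real.exp 1 * Real.sqrt A * Real.sqrt ((n : ℝ) / k)) *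
              vrad k H (projSet H K) := by
  intro k hk1 hkn H hH
  have hk0 : (0 : ℝ) < k := by exact_mod_cast hk1
  have hn0 : (0 : ℝ) < n := by
    have : 0 < n := by omega
    exact_mod_cast this
  have hAnk : 0 < A * n / k := by positivity
  set t : ℝ := Real.sqrt (A * n / k) with ht
  have ht0 : 0 < t := Real.sqrt_pos.2 hAnk
  have ht2 : t ^ 2 = A * n / k := Real.sq_sqrt hAnk.le
  have hexp : A * n / t ^ 2 = k := by
    rw [ht2]; field_simp
  have hc := hcov t ht0
  rw [hexp] at hc
  -- a minimal cover
  have hne : covN (closedBall (0 : EuclideanSpace ℝ (Fin n)) 1) (t • K) ≠ ⊤ := by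
    intro h
    rw [h] at hc
    simp at hc
  have hnonempty : ((fun s : Finset (EuclideanSpace ℝ (Fin n)) => (s.card : ℕ∞)) ''
    {s | closedBall (0 : EuclideanSpace ℝ (Fin n)) 1 ⊆
      ⋃ x ∈ s, (fun b => x + b) '' (t • K)}).Nonempty := by
    by_contra h
    rw [Set.not_nonempty_iff_eq_empty] at h
    apply hne
    unfold covN
    rw [h, sInf_empty]
  obtain ⟨s, hs, hcard⟩ := csInf_mem hnonempty
  have hcard' : (s.card : ℝ≥0∞) ≤ ENNReal.ofReal (Real.exp k) := by
    have : (s.card : ℕ∞) = covN (closedBall (0 : EuclideanSpace ℝ (Fin n)) 1) (t • K) := hcard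
    rw [← this] at hc
    simpa using hc
  have hsub : closedBall (0 : EuclideanSpace ℝ (Fin n)) 1 ∩ (H : Set _) ⊆
      ⋃ x ∈ s, (fun b => (Submodule.orthogonalProjectionOnto H x :
        EuclideanSpace ℝ (Fin n)) + b) '' (t • projSet H K) := by
    rintro y ⟨hy, hyH⟩
    have := hs hy
    simp only [mem_iUnion, mem_image, Set.mem_smul_set] at this
    obtain ⟨x, hx, b, ⟨z, hz, rfl⟩, hxy⟩ := this
    simp only [mem_iUnion]
    refine ⟨x, hx, _, Set.smul_mem_smul_set ⟨z, hz, rfl⟩, ?_⟩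
    have hp : (Submodule.orthogonalProjectionOnto H y : EuclideanSpace ℝ (Fin n)) = y := by
      have := Submodule.orthogonalProjectionOnto_mem_subspace_eq_self (K := H) ⟨y, hyH⟩
      exact congrArg Subtype.val this
    rw [← hxy] at hp
    simp only [map_add, map_smul, Submodule.coe_add, Submodule.coe_smul] at hp
    rw [← hxy]; exact hp
  have hmain : μH[(k : ℝ)] (closedBall (0 : EuclideanSpace ℝ (Fin n)) 1 ∩ (H : Set _)) ≤
      ENNReal.ofReal (Real.exp k) * (ENNReal.ofReal (t ^ k) * μH[(k : ℝ)] (projSet H K)) := by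
    have hone : ∀ x : EuclideanSpace ℝ (Fin n), μH[(k : ℝ)] ((fun b => x + b) ''
        (t • projSet H K)) = ENNReal.ofReal (t ^ k) * μH[(k : ℝ)] (projSet H K) := by
      intro x
      rw [(isometry_add_left x).hausdorffMeasure_image (Or.inl hk0.le),
        Measure.hausdorffMeasure_smul₀ hk0.le ht0.ne']
      rw [ENNReal.smul_def, smul_eq_mul]
      congr 1
      rw [NNReal.rpow_natCast, ENNReal.ofReal_pow ht0.le, ENNReal.coe_pow]
      congr 1
      exact Real.enorm_of_nonneg ht0.le
    calc _ ≤ _ := measure_mono hsub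
      _ ≤ ∑ x ∈ s, _ := measure_biUnion_finset_le _ _
      _ = s.card * (ENNReal.ofReal (t ^ k) * μH[(k : ℝ)] (projSet H K)) := by
        rw [Finset.sum_congr rfl (fun x _ => hone _)]
        simp
      _ ≤ _ := by gcongr
  have hcst : Real.exp 1 ^ k * A ^ ((k : ℝ) / 2) * ((n : ℝ) / k) ^ ((k : ℝ) / 2)
      = Real.exp k * t ^ k := by
    rw [← Real.exp_nat_mul, mul_one, mul_assoc, ← Real.mul_rpow hA.le (by positivity), ht,
      Real.sqrt_eq_rpow, ← Real.rpow_mul_natCast hAnk.le, mul_div_assoc]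
    congr 2; ring
  have hfirst : μH[(k : ℝ)] (closedBall (0 : EuclideanSpace ℝ (Fin n)) 1 ∩ (H : Set _)) ≤
      ENNReal.ofReal (Real.exp k * t ^ k) * μH[(k : ℝ)] (projSet H K) := by
    rw [ENNReal.ofReal_mul (Real.exp_pos _).le, mul_assoc]; exact hmain
  refine ⟨by rw [hcst]; exact hfirst, ?_⟩
  -- ball measure
  have hball : closedBall (0 : EuclideanSpace ℝ (Fin n)) 1 ∩ (H : Set _) =
      (Subtype.val : H → _) '' (closedBall (0 : H) 1) := by
    ext y
    simp only [mem_inter_iff, mem_image, mem_closedBall_zero_iff]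
    constructor
    · rintro ⟨h1, h2⟩; exact ⟨⟨y, h2⟩, h1, rfl⟩
    · rintro ⟨z, h1, rfl⟩; exact ⟨h1, z.2⟩
  have hbm : μH[(k : ℝ)] (closedBall (0 : EuclideanSpace ℝ (Fin n)) 1 ∩ (H : Set _)) =
      μH[(k : ℝ)] (closedBall (0 : H) 1) := by
    rw [hball, isometry_subtype_coe.hausdorffMeasure_image (Or.inl hk0.le)]
  have hb0 : μH[(k : ℝ)] (closedBall (0 : H) 1) ≠ 0 := by
    rw [← hH]; exact (measure_closedBall_pos _ _ one_pos).ne'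
  have hbt : μH[(k : ℝ)] (closedBall (0 : H) 1) ≠ ⊤ := by
    rw [← hH]; exact (isCompact_closedBall _ _).measure_lt_top.ne
  have hc2 : Real.exp 1 * Real.sqrt A * Real.sqrt ((n : ℝ) / k) = Real.exp 1 * t := by
    rw [mul_assoc, ← Real.sqrt_mul hA.le, ht, mul_div_assoc]
  rw [hc2]
  unfold vrad
  rw [hbm] at hfirst ⊢
  have h1 : 1 ≤ ENNReal.ofReal (Real.exp 1 * t) ^ (k : ℝ) *
      (μH[(k : ℝ)] (projSet H K) / μH[(k : ℝ)] (closedBall (0 : H) 1)) := by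
    rw [ENNReal.rpow_natCast, ← ENNReal.ofReal_pow (by positivity), mul_pow, ← Real.exp_nat_mul,
      mul_one, ← mul_div_assoc, ENNReal.le_div_iff_mul_le (Or.inl hb0) (Or.inl hbt), one_mul]
    exact hfirst
  have h2 := ENNReal.rpow_le_rpow h1 (inv_nonneg.2 hk0.le)
  rwa [ENNReal.one_rpow, ENNReal.mul_rpow_of_nonneg _ _ (inv_nonneg.2 hk0.le),
    ENNReal.rpow_rpow_inv hk0.ne'] at h2
end
end
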